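/- Let Ω ⊂ ℝⁿ be a bounded open set with finite perimeter, let u be a non-negative function in BV₀(Ω) with distribution function μ(t) = |{u > t}|, define G(s) := |D(u − u*(s))₊|(ℝⁿ) and let σ be the positive measure on [0,∞) with G(s) = σ((0,s]). Define H(τ) := ∫_τ^{∞} n ω_n^{1/n} μ(ξ)^{1−1/n} dξ. Then for every Borel set A ⊆ [0,∞), σ(A) ≥ D[H(u*)](A), where D[H(u*)] is the distributional derivative (as a measure) of the composition H ∘ u*. -/

import Mathlib

open MeasureTheory Filter Set Metric
open scoped ENNReal NNReal RealInnerProductSpace Topology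

noncomputable section

def diverg {n : ℕ} (φ : EuclideanSpace ℝ (Fin n) → EuclideanSpace ℝ (Fin n))
    (x : EuclideanSpace ℝ (Fin n)) : ℝ :=
  ∑ i, fderiv ℝ φ x (EuclideanSpace.single i (1:ℝ)) i

def varSet {n : ℕ} (w : EuclideanSpace ℝ (Fin n) → ℝ) : Set ℝ :=
  {p | ∃ φ : EuclideanSpace ℝ (Fin n) → EuclideanSpace ℝ (Fin n),
      ContDiff ℝ 1 φ ∧ HasCompactSupport φ ∧ (∀ x, ‖φ x‖ ≤ 1) ∧
      p = ∫ x, w x * diverg φ x}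

def totalVar {n : ℕ} (w : EuclideanSpace ℝ (Fin n) → ℝ) : ℝ := sSup (varSet w)

def IsBV {n : ℕ} (w : EuclideanSpace ℝ (Fin n) → ℝ) : Prop :=
  Integrable w ∧ BddAbove (varSet w)

def perim {n : ℕ} (E : Set (EuclideanSpace ℝ (Fin n))) : ℝ :=
  totalVar (E.indicator fun _ => (1 : ℝ))

def HasFinPerim {n : ℕ} (E : Set (EuclideanSpace ℝ (Fin n))) : Prop :=
  IsBV (E.indicator fun _ => (1 : ℝ))

def omegaN (n : ℕ) : ℝ := (volume (ball (0 : EuclideanSpace ℝ (Fin n)) 1)).toReal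

def decRearr {α : Type*} [MeasurableSpace α] (μ : Measure α) (g : α → ℝ) (s : ℝ) : ℝ :=
  sInf {t : ℝ | 0 < t ∧ μ {x | t < |g x|} ≤ ENNReal.ofReal s}


section Sec_p1
open scoped Pointwise

theorem aux_bm1_compact {K L C : Set ℝ} (hK : IsCompact K) (hL : IsCompact L)
    (hK0 : K.Nonempty) (hL0 : L.Nonempty) (h : ∀ a ∈ K, ∀ b ∈ L, a + b ∈ C) :
    volume K + volume L ≤ volume C := by
  obtain ⟨p, hp, hpK⟩ := hK.exists_isGreatest hK0
  obtain ⟨q, hq, hqL⟩ := hL.exists_isLeast hL0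
  have h1 : volume ((fun x => x + q) '' K) = volume K := by
    simp [measure_preimage_add_right]
  have h2 : volume ((fun x => p + x) '' L) = volume L := by
    simp [measure_preimage_add]
  have hm : NullMeasurableSet ((fun x => p + x) '' L) volume :=
    (hL.image (by fun_prop)).measurableSet.nullMeasurableSet
  have hd : AEDisjoint volume ((fun x => x + q) '' K) ((fun x => p + x) '' L) := by
    refine measure_mono_null (t := {p + q}) ?_ (by simp)
    rintro x ⟨⟨a, ha, rfl⟩, ⟨b, hb, hab⟩⟩
    have := hpK ha
    have := hqL hb
    simp only at hab
    simp only [mem_singleton_iff]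
    linarith
  rw [← h1, ← h2, ← measure_union₀ hm hd]
  apply measure_mono
  rintro x (⟨a, ha, rfl⟩ | ⟨b, hb, rfl⟩)
  · exact h a ha q hq
  · exact h p hp b hb

theorem aux_bm1 {A B C : Set ℝ} (hA : MeasurableSet A) (hB : MeasurableSet B)
    (hA0 : A.Nonempty) (hB0 : B.Nonempty) (h : ∀ a ∈ A, ∀ b ∈ B, a + b ∈ C) :
    volume A + volume B ≤ volume C := by
  have sup : ∀ S : Set ℝ, MeasurableSet S → S.Nonempty →
      volume S = ⨆ K : {K : Set ℝ // K ⊆ S ∧ IsCompact K ∧ K.Nonempty}, volume K.1 := by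
    intro S hS ⟨x, hx⟩
    apply le_antisymm
    · apply le_of_forall_lt
      intro r hr
      obtain ⟨K, hKS, hK, hrK⟩ := hS.exists_lt_isCompact hr
      have : K.Nonempty := by
        rw [nonempty_iff_ne_empty]; rintro rfl; simp at hrK
      exact lt_of_lt_of_le hrK (le_iSup (fun K : {K : Set ℝ // K ⊆ S ∧ IsCompact K ∧ K.Nonempty} => volume K.1) ⟨K, hKS, hK, this⟩)
    · exact iSup_le fun K => measure_mono K.2.1
  rw [sup A hA hA0, sup B hB hB0]
  have : Nonempty {K : Set ℝ // K ⊆ A ∧ IsCompact K ∧ K.Nonempty} := by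
    obtain ⟨x, hx⟩ := hA0
    exact ⟨{x}, by simpa using hx, isCompact_singleton, by simp⟩
  have : Nonempty {K : Set ℝ // K ⊆ B ∧ IsCompact K ∧ K.Nonempty} := by
    obtain ⟨x, hx⟩ := hB0
    exact ⟨{x}, by simpa using hx, isCompact_singleton, by simp⟩
  apply ENNReal.iSup_add_iSup_le
  intro K L
  exact aux_bm1_compact K.2.2.1 L.2.2.1 K.2.2.2 L.2.2.2
    fun a ha b hb => h a (K.2.1 ha) b (L.2.1 hb)

theorem aux_amgm (a b : ℝ≥0∞) (l : ℝ) (h0 : 0 < l) (h1 : l < 1) :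
    a ^ (1 - l) * b ^ l ≤ ENNReal.ofReal (1 - l) * a + ENNReal.ofReal l * b := by
  have hl : 0 < 1 - l := by linarith
  by_cases ha : a = ∞
  · subst ha
    rw [ENNReal.mul_top (by simpa using hl)]
    simp
  by_cases hb : b = ∞
  · subst hb
    rw [ENNReal.mul_top (by simpa using h0)]
    simp
  lift a to ℝ≥0 using ha
  lift b to ℝ≥0 using hb
  have := Real.geom_mean_le_arith_mean2_weighted hl.le h0.le a.coe_nonneg b.coe_nonneg (by ring)
  rw [← ENNReal.ofReal_coe_nnreal (p := a), ← ENNReal.ofReal_coe_nnreal (p := b),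
    ENNReal.ofReal_rpow_of_nonneg a.coe_nonneg hl.le, ENNReal.ofReal_rpow_of_nonneg b.coe_nonneg h0.le,
    ← ENNReal.ofReal_mul (Real.rpow_nonneg a.coe_nonneg _), ← ENNReal.ofReal_mul hl.le,
    ← ENNReal.ofReal_mul h0.le,
    ← ENNReal.ofReal_add (mul_nonneg hl.le a.coe_nonneg) (mul_nonneg h0.le b.coe_nonneg)]
  exact ENNReal.ofReal_le_ofReal this

theorem aux_pl1_norm (f g h : ℝ → ℝ) (hf : Measurable f) (hg : Measurable g) (hh : Measurable h)
    (f0 : ∀ x, 0 ≤ f x) (g0 : ∀ x, 0 ≤ g x) (h0 : ∀ x, 0 ≤ h x)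
    (f1 : ∀ x, f x ≤ 1) (g1 : ∀ x, g x ≤ 1)
    (fs : ∀ r < 1, ∃ x, r < f x) (gs : ∀ r < 1, ∃ x, r < g x)
    (l : ℝ) (l0 : 0 < l) (l1 : l < 1)
    (H : ∀ s t, f s ^ (1 - l) * g t ^ l ≤ h ((1 - l) * s + l * t)) :
    (∫⁻ x, ENNReal.ofReal (f x)) ^ (1 - l) * (∫⁻ x, ENNReal.ofReal (g x)) ^ l
      ≤ ∫⁻ x, ENNReal.ofReal (h x) := by
  refine (aux_amgm _ _ l l0 l1).trans ?_
  have hl : 0 < 1 - l := by linarith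
  have lc : ∀ k : ℝ → ℝ, (∀ x, 0 ≤ k x) → Measurable k → (∀ x, k x ≤ 1) →
      ∫⁻ x, ENNReal.ofReal (k x) = ∫⁻ t in Ioo (0:ℝ) 1, volume {a | t < k a} := by
    intro k k0 km k1
    rw [lintegral_eq_lintegral_meas_lt volume (Eventually.of_forall k0) km.aemeasurable,
      ← Ioo_union_Ici_eq_Ioi (zero_lt_one' ℝ), lintegral_union measurableSet_Ici]
    · rw [setLIntegral_congr_fun (g := fun _ => 0) measurableSet_Ici]
      · simp
      · intro t ht
        have : {a | t < k a} = ∅ := by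
          ext a; simp only [mem_ofPred_eq, mem_empty_iff_false, iff_false, not_lt]
          exact (k1 a).trans ht
        simp [this]
    · rw [Set.disjoint_left]; intro x hx hx'; exact absurd hx.2 (not_lt.2 hx')
  rw [lc f f0 hf f1, lc g g0 hg g1,
    lintegral_eq_lintegral_meas_lt volume (Eventually.of_forall h0) hh.aemeasurable]
  have ml : ∀ k : ℝ → ℝ, Measurable k → Measurable fun t : ℝ => volume {a | t < k a} := by
    intro k km
    apply Antitone.measurable
    intro s t hst
    exact measure_mono fun a (ha : t < k a) => lt_of_le_of_lt hst ha
  rw [← lintegral_const_mul _ (ml f hf), ← lintegral_const_mul _ (ml g hg),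
    ← lintegral_add_left ((ml f hf).const_mul _)]
  refine le_trans ?_ (lintegral_mono_set (Ioo_subset_Ioi_self (b := 0) (a := 1)))
  apply setLIntegral_mono (ml h hh)
  intro r hr
  have sc : ∀ (c : ℝ) (S : Set ℝ), 0 < c → ENNReal.ofReal c * volume S = volume (c • S) := by
    intro c S hc
    rw [Measure.addHaar_smul]; simp [abs_of_pos hc]
  rw [sc _ _ hl, sc _ _ l0]
  apply aux_bm1
  · exact (hf measurableSet_Ioi).const_smul₀ _
  · exact (hg measurableSet_Ioi).const_smul₀ _
  · obtain ⟨x, hx⟩ := fs r hr.2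
    exact Set.Nonempty.smul_set ⟨x, hx⟩
  · obtain ⟨x, hx⟩ := gs r hr.2
    exact Set.Nonempty.smul_set ⟨x, hx⟩
  · rintro _ ⟨s, hs, rfl⟩ _ ⟨t, ht, rfl⟩
    simp only [mem_ofPred_eq, smul_eq_mul] at *
    refine lt_of_lt_of_le ?_ (H s t)
    have e : r = r ^ (1 - l) * r ^ l := by
      rw [← Real.rpow_add hr.1]; simp
    rw [e]
    exact mul_lt_mul'' (Real.rpow_lt_rpow hr.1.le hs hl) (Real.rpow_lt_rpow hr.1.le ht l0)
      (Real.rpow_nonneg hr.1.le _) (Real.rpow_nonneg hr.1.le _)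

theorem aux_pl1 (f g h : ℝ → ℝ) (hf : Measurable f) (hg : Measurable g) (hh : Measurable h)
    (f0 : ∀ x, 0 ≤ f x) (g0 : ∀ x, 0 ≤ g x) (h0 : ∀ x, 0 ≤ h x)
    (f1 : BddAbove (range f)) (g1 : BddAbove (range g))
    (l : ℝ) (l0 : 0 < l) (l1 : l < 1)
    (H : ∀ s t, f s ^ (1 - l) * g t ^ l ≤ h ((1 - l) * s + l * t)) :
    (∫⁻ x, ENNReal.ofReal (f x)) ^ (1 - l) * (∫⁻ x, ENNReal.ofReal (g x)) ^ l
      ≤ ∫⁻ x, ENNReal.ofReal (h x) := by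
  have hl : 0 < 1 - l := by linarith
  by_cases hF : ∀ x, f x = 0
  · simp [hF, hl]
  by_cases hG : ∀ x, g x = 0
  · simp [hG, l0]
  push Not at hF hG
  obtain ⟨x0, hx0⟩ := hF
  obtain ⟨y0, hy0⟩ := hG
  set F := ⨆ x, f x with hFdef
  set K := ⨆ x, g x with hKdef
  have fF : ∀ x, f x ≤ F := fun x => le_ciSup f1 x
  have gK : ∀ x, g x ≤ K := fun x => le_ciSup g1 x
  have Fp : 0 < F := lt_of_lt_of_le (lt_of_le_of_ne (f0 x0) (Ne.symm hx0)) (fF x0)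
  have Kp : 0 < K := lt_of_lt_of_le (lt_of_le_of_ne (g0 y0) (Ne.symm hy0)) (gK y0)
  set P := F ^ (1 - l) * K ^ l with hP
  have Pp : 0 < P := mul_pos (Real.rpow_pos_of_pos Fp _) (Real.rpow_pos_of_pos Kp _)
  have main := aux_pl1_norm (fun x => F⁻¹ * f x) (fun x => K⁻¹ * g x) (fun x => P⁻¹ * h x)
    (hf.const_mul _) (hg.const_mul _) (hh.const_mul _)
    (fun x => mul_nonneg (by positivity) (f0 x)) (fun x => mul_nonneg (by positivity) (g0 x))
    (fun x => mul_nonneg (by positivity) (h0 x))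
    (fun x => by rw [inv_mul_le_iff₀ Fp]; simpa using fF x)
    (fun x => by rw [inv_mul_le_iff₀ Kp]; simpa using gK x)
    (fun r hr => by
      obtain ⟨x, hx⟩ := exists_lt_of_lt_ciSup (show F * r < ⨆ x, f x by
        rw [← hFdef]; nlinarith)
      exact ⟨x, by rw [lt_inv_mul_iff₀ Fp]; exact hx⟩)
    (fun r hr => by
      obtain ⟨x, hx⟩ := exists_lt_of_lt_ciSup (show K * r < ⨆ x, g x by
        rw [← hKdef]; nlinarith)
      exact ⟨x, by rw [lt_inv_mul_iff₀ Kp]; exact hx⟩) l l0 l1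
    (fun s t => by
      rw [Real.mul_rpow (by positivity) (f0 s), Real.mul_rpow (by positivity) (g0 t),
        Real.inv_rpow Fp.le, Real.inv_rpow Kp.le]
      have : P⁻¹ * (f s ^ (1 - l) * g t ^ l) ≤ P⁻¹ * h ((1 - l) * s + l * t) :=
        mul_le_mul_of_nonneg_left (H s t) (by positivity)
      refine le_trans (le_of_eq ?_) this
      rw [hP, mul_inv]; ring)
  have sc : ∀ (c : ℝ) (k : ℝ → ℝ), 0 < c → Measurable k →
      ∫⁻ x, ENNReal.ofReal (c * k x) = ENNReal.ofReal c * ∫⁻ x, ENNReal.ofReal (k x) := by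
    intro c k hc km
    rw [← lintegral_const_mul _ km.ennreal_ofReal]
    congr 1; ext x; rw [ENNReal.ofReal_mul hc.le]
  rw [sc _ _ (inv_pos.2 Fp) hf, sc _ _ (inv_pos.2 Kp) hg, sc _ _ (inv_pos.2 Pp) hh,
    ENNReal.mul_rpow_of_nonneg _ _ hl.le, ENNReal.mul_rpow_of_nonneg _ _ l0.le,
    ENNReal.ofReal_rpow_of_pos (inv_pos.2 Fp), ENNReal.ofReal_rpow_of_pos (inv_pos.2 Kp),
    mul_mul_mul_comm, ← ENNReal.ofReal_mul (by positivity), Real.inv_rpow Fp.le,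
    Real.inv_rpow Kp.le, ← mul_inv, ← hP] at main
  exact (ENNReal.mul_le_mul_iff_right (by simpa using Pp) (by simp)).1 main

theorem aux_bm_mul (n : ℕ) : ∀ (A B C : Set (Fin n → ℝ)), IsOpen A → IsOpen B → MeasurableSet C →
    Bornology.IsBounded A → Bornology.IsBounded B → Bornology.IsBounded C →
    ∀ (l : ℝ), 0 < l → l < 1 → (∀ a ∈ A, ∀ b ∈ B, (1 - l) • a + l • b ∈ C) →
    volume A ^ (1 - l) * volume B ^ l ≤ volume C := by
  induction n with
  | zero =>
    intro A B C _ _ _ _ _ _ l l0 l1 h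
    have hl : 0 < 1 - l := by linarith
    rcases A.eq_empty_or_nonempty with rfl | ⟨a, ha⟩
    · simp [hl]
    rcases B.eq_empty_or_nonempty with rfl | ⟨b, hb⟩
    · simp [l0]
    have hc := h a ha b hb
    have e : ∀ S : Set (Fin 0 → ℝ), S.Nonempty → S = univ := by
      intro S hS; exact Subsingleton.eq_univ_of_nonempty hS
    rw [e A ⟨a, ha⟩, e B ⟨b, hb⟩, e C ⟨_, hc⟩]
    simp [volume_pi]
  | succ n ih =>
    intro A B C hA hB hC bA bB bC l l0 l1 h
    have hl : 0 < 1 - l := by linarith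
    set e := (MeasurableEquiv.piFinSuccAbove (fun _ : Fin (n+1) => ℝ) 0) with he
    have hes : ∀ (t : ℝ) (y : Fin n → ℝ), e.symm (t, y) = Fin.cons t y := by
      intro t y; simp [e]; rfl
    have mp : MeasurePreserving e.symm volume volume :=
      (volume_preserving_piFinSuccAbove (fun _ : Fin (n+1) => ℝ) 0).symm
    have hvol : ∀ S : Set (Fin (n+1) → ℝ), MeasurableSet S →
        volume S = ∫⁻ t, volume {y : Fin n → ℝ | (Fin.cons t y : Fin (n+1) → ℝ) ∈ S} := by
      intro S hS
      rw [← mp.measure_preimage hS.nullMeasurableSet]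
      rw [Measure.volume_eq_prod, Measure.prod_apply (e.symm.measurable hS)]
      congr 1; ext t; congr 1; ext y
      simp [hes]
    have hmeas : ∀ S : Set (Fin (n+1) → ℝ), MeasurableSet S →
        Measurable fun t : ℝ => volume {y : Fin n → ℝ | (Fin.cons t y : Fin (n+1) → ℝ) ∈ S} := by
      intro S hS
      have := measurable_measure_prodMk_left (ν := (volume : Measure (Fin n → ℝ))) (e.symm.measurable hS)
      convert this using 3 with t
      ext y; simp [hes]
    have hb : ∀ S : Set (Fin (n+1) → ℝ), Bornology.IsBounded S → ∃ R : ℝ, ∀ t : ℝ,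
        {y : Fin n → ℝ | (Fin.cons t y : Fin (n+1) → ℝ) ∈ S} ⊆ closedBall 0 R := by
      intro S hS
      obtain ⟨R, hR⟩ := hS.subset_closedBall 0
      refine ⟨R, fun t y hy => ?_⟩
      have := hR hy
      rw [mem_closedBall_zero_iff] at this ⊢
      have hR0 : 0 ≤ R := (norm_nonneg _).trans this
      rw [pi_norm_le_iff_of_nonneg hR0] at this ⊢
      intro i; simpa using this i.succ
    have cont : ∀ t : ℝ, Continuous fun y : Fin n → ℝ => (Fin.cons t y : Fin (n+1) → ℝ) := by
      intro t
      refine continuous_pi fun i => ?_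
      refine Fin.cases ?_ (fun j => ?_) i
      · simpa using continuous_const
      · simpa using continuous_apply j
    have hfin : ∀ S : Set (Fin (n+1) → ℝ), Bornology.IsBounded S → ∀ t : ℝ,
        volume {y : Fin n → ℝ | (Fin.cons t y : Fin (n+1) → ℝ) ∈ S} ≠ ∞ := by
      intro S hS t
      obtain ⟨R, hR⟩ := hb S hS
      exact (lt_of_le_of_lt (measure_mono (hR t)) measure_closedBall_lt_top).ne
    have hbdd : ∀ S : Set (Fin (n+1) → ℝ), Bornology.IsBounded S → BddAbove (range fun t : ℝ =>
        (volume {y : Fin n → ℝ | (Fin.cons t y : Fin (n+1) → ℝ) ∈ S}).toReal) := by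
      intro S hS
      obtain ⟨R, hR⟩ := hb S hS
      refine ⟨(volume (closedBall (0 : Fin n → ℝ) R)).toReal, ?_⟩
      rintro _ ⟨t, rfl⟩
      exact ENNReal.toReal_mono measure_closedBall_lt_top.ne (measure_mono (hR t))
    have hvol' : ∀ S : Set (Fin (n+1) → ℝ), MeasurableSet S → Bornology.IsBounded S →
        volume S = ∫⁻ t, ENNReal.ofReal
          (volume {y : Fin n → ℝ | (Fin.cons t y : Fin (n+1) → ℝ) ∈ S}).toReal := by
      intro S hS bS
      rw [hvol S hS]; congr 1; ext t; rw [ENNReal.ofReal_toReal (hfin S bS t)]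
    rw [hvol' A hA.measurableSet bA, hvol' B hB.measurableSet bB, hvol' C hC bC]
    apply aux_pl1 _ _ _ (hmeas A hA.measurableSet).ennreal_toReal
      (hmeas B hB.measurableSet).ennreal_toReal (hmeas C hC).ennreal_toReal
      (fun _ => ENNReal.toReal_nonneg) (fun _ => ENNReal.toReal_nonneg)
      (fun _ => ENNReal.toReal_nonneg) (hbdd A bA) (hbdd B bB) l l0 l1
    intro s t
    rw [ENNReal.toReal_rpow, ENNReal.toReal_rpow, ← ENNReal.toReal_mul]
    apply ENNReal.toReal_mono (hfin C bC _)
    have sb : ∀ S : Set (Fin (n+1) → ℝ), Bornology.IsBounded S → ∀ t : ℝ,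
        Bornology.IsBounded {y : Fin n → ℝ | (Fin.cons t y : Fin (n+1) → ℝ) ∈ S} := by
      intro S hS t
      obtain ⟨R, hR⟩ := hb S hS
      exact isBounded_closedBall.subset (hR t)
    apply ih _ _ _ (hA.preimage (cont s)) (hB.preimage (cont t))
      ((cont _).measurable hC) (sb A bA s) (sb B bB t) (sb C bC _) l l0 l1
    intro a ha b hb'
    have := h _ ha _ hb'
    simp only [mem_preimage]
    convert this using 1
    ext i
    refine Fin.cases ?_ (fun j => ?_) i <;> simp

theorem aux_bm_mul_euc (n : ℕ) (A B C : Set (EuclideanSpace ℝ (Fin n))) (hA : IsOpen A)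
    (hB : IsOpen B) (hC : MeasurableSet C)
    (bA : Bornology.IsBounded A) (bB : Bornology.IsBounded B) (bC : Bornology.IsBounded C)
    (l : ℝ) (l0 : 0 < l) (l1 : l < 1) (h : ∀ a ∈ A, ∀ b ∈ B, (1 - l) • a + l • b ∈ C) :
    volume A ^ (1 - l) * volume B ^ l ≤ volume C := by
  have mp := PiLp.volume_preserving_toLp (Fin n)
  rw [← mp.measure_preimage hA.measurableSet.nullMeasurableSet,
    ← mp.measure_preimage hB.measurableSet.nullMeasurableSet,
    ← mp.measure_preimage hC.nullMeasurableSet]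
  have cont : Continuous (WithLp.toLp 2 : (Fin n → ℝ) → EuclideanSpace ℝ (Fin n)) :=
    PiLp.continuous_toLp 2 _
  have bd : ∀ S : Set (EuclideanSpace ℝ (Fin n)), Bornology.IsBounded S →
      Bornology.IsBounded ((WithLp.toLp 2 : (Fin n → ℝ) → EuclideanSpace ℝ (Fin n)) ⁻¹' S) := by
    intro S hS
    exact (PiLp.antilipschitzWith_toLp 2 (fun _ : Fin n => ℝ)).isBounded_preimage hS
  apply aux_bm_mul n _ _ _ (hA.preimage cont) (hB.preimage cont) (mp.measurable hC)
    (bd A bA) (bd B bB) (bd C bC) l l0 l1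
  intro a ha b hb
  exact h _ ha _ hb

end Sec_p1

section Sec_p2
open scoped Pointwise

theorem aux_omega_pos (n : ℕ) : 0 < omegaN n := by
  unfold omegaN
  exact ENNReal.toReal_pos (measure_ball_pos _ _ one_pos).ne' measure_ball_lt_top.ne

theorem aux_iso_set {n : ℕ} (hn : 2 ≤ n) (E W : Set (EuclideanSpace ℝ (Fin n)))
    (hE : IsOpen E) (bE : Bornology.IsBounded E) (h : ℝ) (hh : 0 < h)
    (hW : ∀ x ∈ E, ∀ y ∈ ball (0 : EuclideanSpace ℝ (Fin n)) h, x + y ∈ W) :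
    volume E + ENNReal.ofReal (h * (n * omegaN n ^ ((1 : ℝ) / n)))
      * volume E ^ (1 - (1 : ℝ) / n) ≤ volume W := by
  have hn0 : (0 : ℝ) < n := by positivity
  have hn1 : (1 : ℝ) < n := by exact_mod_cast hn
  have hp : 0 < 1 - (1 : ℝ) / n := by
    rw [sub_pos, div_lt_one hn0]; exact hn1
  rcases E.eq_empty_or_nonempty with rfl | hEne
  · rw [measure_empty, ENNReal.zero_rpow_of_pos hp]; simp
  have Efin : volume E ≠ ∞ := bE.measure_lt_top.ne
  set e := (volume E).toReal with he
  have epos : 0 < e := ENNReal.toReal_pos (hE.measure_pos volume hEne).ne' Efin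
  have vE : volume E = ENNReal.ofReal e := (ENNReal.ofReal_toReal Efin).symm
  set w := omegaN n with hw
  have wpos : 0 < w := aux_omega_pos n
  set a := e ^ ((1 : ℝ) / n) with ha
  set r := w ^ ((1 : ℝ) / n) with hr
  have apos : 0 < a := Real.rpow_pos_of_pos epos _
  have rpos : 0 < r := Real.rpow_pos_of_pos wpos _
  have an : a ^ n = e := by
    rw [ha, ← Real.rpow_natCast, ← Real.rpow_mul epos.le, one_div, inv_mul_cancel₀ hn0.ne',
      Real.rpow_one]
  have rn : r ^ n = w := by
    rw [hr, ← Real.rpow_natCast, ← Real.rpow_mul wpos.le, one_div, inv_mul_cancel₀ hn0.ne',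
      Real.rpow_one]
  set b := h * r with hb
  have bpos : 0 < b := mul_pos hh rpos
  set Bh := ball (0 : EuclideanSpace ℝ (Fin n)) h with hBh
  have vB : volume Bh = ENNReal.ofReal (b ^ n) := by
    rw [hBh, Measure.addHaar_ball_of_pos _ _ hh, hb, mul_pow, rn, ENNReal.ofReal_mul (by positivity),
      hw, omegaN, ENNReal.ofReal_toReal measure_ball_lt_top.ne]
    simp
  set l := b / (a + b) with hl
  have l0 : 0 < l := by positivity
  have l1 : l < 1 := by rw [hl, div_lt_one (by positivity)]; linarith
  set W' := E + Bh with hW'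
  have oW' : IsOpen W' := hE.add_right
  have bW' : Bornology.IsBounded W' := bE.add isBounded_ball
  have W'W : W' ⊆ W := by
    rintro _ ⟨x, hx, y, hy, rfl⟩
    exact hW x hx y hy
  have key := aux_bm_mul_euc n (a⁻¹ • E) (b⁻¹ • Bh) ((a + b)⁻¹ • W')
    (hE.smul₀ (by positivity)) (isOpen_ball.smul₀ (by positivity))
    (oW'.smul₀ (by positivity)).measurableSet
    (bE.smul₀ _) (isBounded_ball.smul₀ _) (bW'.smul₀ _) l l0 l1 (by
      rintro _ ⟨x, hx, rfl⟩ _ ⟨y, hy, rfl⟩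
      refine ⟨x + y, ⟨x, hx, y, hy, rfl⟩, ?_⟩
      simp only [smul_smul, smul_add]
      congr 2
      · rw [hl]; field_simp; ring
      · rw [hl]; field_simp)
  have sc : ∀ (c : ℝ), 0 < c → ∀ S : Set (EuclideanSpace ℝ (Fin n)),
      volume (c⁻¹ • S) = ENNReal.ofReal ((c ^ n)⁻¹) * volume S := by
    intro c hc S
    rw [Measure.addHaar_smul]
    simp only [finrank_euclideanSpace, Fintype.card_fin, inv_pow]
    rw [abs_of_pos (by positivity)]
  rw [sc a apos, sc b bpos, sc (a + b) (by positivity), vE, vB, an,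
    ← ENNReal.ofReal_mul (by positivity), ← ENNReal.ofReal_mul (by positivity),
    inv_mul_cancel₀ epos.ne', inv_mul_cancel₀ (by positivity)] at key
  simp only [ENNReal.ofReal_one, ENNReal.one_rpow, mul_one] at key
  have key2 : ENNReal.ofReal ((a + b) ^ n) ≤ volume W' := by
    have h1 : ENNReal.ofReal ((a + b) ^ n) * 1 ≤ _ := mul_le_mul_right key _
    rw [← mul_assoc, ← ENNReal.ofReal_mul (by positivity), mul_inv_cancel₀ (by positivity)] at h1
    simpa using h1
  refine le_trans ?_ (key2.trans (measure_mono W'W))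
  rw [vE, ENNReal.ofReal_rpow_of_pos epos, ← ENNReal.ofReal_mul (by positivity),
    ← ENNReal.ofReal_add (by positivity) (by positivity)]
  apply ENNReal.ofReal_le_ofReal
  have e1 : e ^ (1 - (1 : ℝ) / n) = e / a := by
    rw [Real.rpow_sub epos, Real.rpow_one]
  rw [e1]
  have bern := one_add_mul_le_pow (show (-2 : ℝ) ≤ b / a by
    have : 0 < b / a := by positivity
    linarith) n
  have : (a + b) ^ n = e * (1 + b / a) ^ n := by
    rw [← an, ← mul_pow]; congr 1; field_simp
  rw [this]
  calc e + h * (n * r) * (e / a) = e * (1 + n * (b / a)) := by rw [hb]; field_simp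
    _ ≤ _ := mul_le_mul_of_nonneg_left bern epos.le

theorem aux_meas_lt {α : Type*} [MeasurableSpace α] (m : Measure α) (k : α → ℝ) :
    Measurable fun t : ℝ => m {a | t < k a} := by
  apply Antitone.measurable
  intro s t hst
  exact measure_mono fun a (ha : t < k a) => lt_of_le_of_lt hst ha

theorem aux_iso_C1 {n : ℕ} (hn : 2 ≤ n) (v : EuclideanSpace ℝ (Fin n) → ℝ)
    (hv : ContDiff ℝ 1 v) (cv : HasCompactSupport v) (v0 : ∀ x, 0 ≤ v x) :
    ENNReal.ofReal (n * omegaN n ^ ((1 : ℝ) / n)) *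
      ∫⁻ ξ in Ioi (0 : ℝ), volume {x | ξ < v x} ^ (1 - (1 : ℝ) / n)
      ≤ ENNReal.ofReal (∫ x, ‖fderiv ℝ v x‖) := by
  set c := n * omegaN n ^ ((1 : ℝ) / n) with hc
  have cpos : 0 ≤ c := by
    have := aux_omega_pos n
    positivity
  set K := cthickening 1 (tsupport v) with hK
  have cK : IsCompact K := IsCompact.cthickening cv
  have vK : volume K ≠ ∞ := cK.measure_lt_top.ne
  have cd : Continuous (fderiv ℝ v) := hv.continuous_fderiv one_ne_zero
  have csd : HasCompactSupport (fderiv ℝ v) := cv.fderiv ℝ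
  have uc : UniformContinuous (fderiv ℝ v) := csd.uniformContinuous_of_continuous cd
  have ind : Integrable (fun x => ‖fderiv ℝ v x‖) := (cd.integrable_of_hasCompactSupport csd).norm
  have inv : Integrable v := hv.continuous.integrable_of_hasCompactSupport cv
  have main : ∀ δ : ℝ, 0 < δ →
      ENNReal.ofReal c * ∫⁻ ξ in Ioi (0 : ℝ), volume {x | ξ < v x} ^ (1 - (1 : ℝ) / n)
      ≤ ENNReal.ofReal (∫ x, ‖fderiv ℝ v x‖) + ENNReal.ofReal δ * volume K := by
    intro δ hδ
    obtain ⟨η, hη, hηd⟩ := Metric.uniformContinuous_iff.1 uc δ hδ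
    set h := min η 1 with hh
    have hpos : 0 < h := lt_min hη one_pos
    -- the enlarged function
    set W : EuclideanSpace ℝ (Fin n) → ℝ :=
      fun x => v x + (h * ‖fderiv ℝ v x‖ + K.indicator (fun _ => h * δ) x) with hWdef
    have ind0 : ∀ x, 0 ≤ K.indicator (fun _ => h * δ) x := fun x =>
      indicator_nonneg (fun _ _ => by positivity) x
    have W0 : ∀ x, 0 ≤ W x := fun x => by
      have := ind0 x; have := v0 x; positivity
    have Wm : Measurable W := by
      refine hv.continuous.measurable.add ((cd.norm.measurable.const_mul _).add ?_)
      exact measurable_const.indicator cK.isClosed.measurableSet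
    have incr : ∀ x y, dist y x < h → v y ≤ W x := by
      intro x y hxy
      by_cases hx : x ∈ K
      · have hb : ∀ z ∈ ball x h, ‖fderiv ℝ v z‖ ≤ ‖fderiv ℝ v x‖ + δ := by
          intro z hz
          have h1 : dist (fderiv ℝ v z) (fderiv ℝ v x) < δ :=
            hηd (lt_of_lt_of_le hz (min_le_left _ _))
          rw [dist_eq_norm] at h1
          have h2 := norm_sub_norm_le (fderiv ℝ v z) (fderiv ℝ v x)
          linarith
        have := (convex_ball x h).norm_image_sub_le_of_norm_fderiv_le
          (fun z _ => (hv.differentiable one_ne_zero) z) hb (mem_ball_self hpos) hxy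
        have h3 : v y - v x ≤ (‖fderiv ℝ v x‖ + δ) * ‖y - x‖ := (le_abs_self _).trans this
        have h4 : (‖fderiv ℝ v x‖ + δ) * ‖y - x‖ ≤ (‖fderiv ℝ v x‖ + δ) * h := by
          rw [← dist_eq_norm]
          exact mul_le_mul_of_nonneg_left hxy.le (by positivity)
        simp only [hWdef, indicator_of_mem hx]
        linarith
      · have : v y = 0 := by
          by_contra hne
          apply hx
          refine mem_cthickening_of_dist_le x y 1 _ (subset_tsupport v hne) ?_
          rw [dist_comm]; exact hxy.le.trans (min_le_right _ _)
        rw [this]; exact W0 x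
    have step : ∀ ξ : ℝ, 0 < ξ → volume {x | ξ < v x} + ENNReal.ofReal (h * c) *
        volume {x | ξ < v x} ^ (1 - (1 : ℝ) / n) ≤ volume {x | ξ < W x} := by
      intro ξ hξ
      apply aux_iso_set hn _ _ (isOpen_lt continuous_const hv.continuous) _ h hpos
      · intro x hx y hy
        refine lt_of_lt_of_le (show ξ < v x from hx) (incr _ _ ?_)
        simpa using hy
      · refine cv.isCompact.isBounded.subset fun x (hx : ξ < v x) => subset_tsupport v ?_
        exact (hξ.trans hx).ne'
    have mp : Measurable fun ξ : ℝ => volume {x | ξ < v x} ^ (1 - (1 : ℝ) / n) :=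
      (aux_meas_lt volume v).pow_const _
    have int1 : (∫⁻ x, ENNReal.ofReal (v x)) + ENNReal.ofReal (h * c) *
        (∫⁻ ξ in Ioi (0 : ℝ), volume {x | ξ < v x} ^ (1 - (1 : ℝ) / n))
        ≤ ∫⁻ x, ENNReal.ofReal (W x) := by
      rw [lintegral_eq_lintegral_meas_lt volume (Eventually.of_forall v0)
        hv.continuous.measurable.aemeasurable,
        lintegral_eq_lintegral_meas_lt volume (Eventually.of_forall W0) Wm.aemeasurable,
        ← lintegral_const_mul _ mp, ← lintegral_add_left (aux_meas_lt volume v)]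
      exact setLIntegral_mono (aux_meas_lt volume W) fun ξ hξ => step ξ hξ
    have int2 : ∫⁻ x, ENNReal.ofReal (W x) = (∫⁻ x, ENNReal.ofReal (v x)) +
        ENNReal.ofReal h * (ENNReal.ofReal (∫ x, ‖fderiv ℝ v x‖) + ENNReal.ofReal δ * volume K) := by
      have : ∀ x, ENNReal.ofReal (W x) = ENNReal.ofReal (v x) + (ENNReal.ofReal h *
          ENNReal.ofReal ‖fderiv ℝ v x‖ + K.indicator (fun _ => ENNReal.ofReal (h * δ)) x) := by
        intro x
        rw [hWdef]
        simp only
        rw [ENNReal.ofReal_add (v0 x) (by have := ind0 x; positivity),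
          ENNReal.ofReal_add (by positivity) (ind0 x), ENNReal.ofReal_mul hpos.le]
        congr 2
        by_cases hx : x ∈ K <;> simp [hx]
      simp_rw [this]
      rw [lintegral_add_left hv.continuous.measurable.ennreal_ofReal,
        lintegral_add_left (cd.norm.measurable.ennreal_ofReal.const_mul _),
        lintegral_const_mul _ cd.norm.measurable.ennreal_ofReal,
        ← ofReal_integral_eq_lintegral_ofReal ind (Eventually.of_forall fun _ => norm_nonneg _),
        lintegral_indicator_const cK.isClosed.measurableSet, ENNReal.ofReal_mul hpos.le]
      ring
    rw [int2] at int1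
    have fin : ∫⁻ x, ENNReal.ofReal (v x) ≠ ∞ := by
      rw [← ofReal_integral_eq_lintegral_ofReal inv (Eventually.of_forall v0)]
      exact ENNReal.ofReal_ne_top
    have int3 := (ENNReal.add_le_add_iff_left fin).1 int1
    rw [ENNReal.ofReal_mul hpos.le, mul_assoc] at int3
    exact (ENNReal.mul_le_mul_iff_right (by simpa using hpos) ENNReal.ofReal_ne_top).1 int3
  have lim : Tendsto (fun δ : ℝ => ENNReal.ofReal (∫ x, ‖fderiv ℝ v x‖) + ENNReal.ofReal δ * volume K)
      (𝓝[>] 0) (𝓝 (ENNReal.ofReal (∫ x, ‖fderiv ℝ v x‖) + 0 * volume K)) := by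
    refine Tendsto.const_add _ (ENNReal.Tendsto.mul_const ?_ (Or.inr vK))
    have : Tendsto (fun δ : ℝ => ENNReal.ofReal δ) (𝓝 0) (𝓝 (ENNReal.ofReal 0)) :=
      ENNReal.continuous_ofReal.tendsto 0
    rw [ENNReal.ofReal_zero] at this
    exact this.mono_left nhdsWithin_le_nhds
  rw [zero_mul, add_zero] at lim
  exact ge_of_tendsto lim (eventually_nhdsWithin_of_forall fun δ hδ => main δ hδ)

end Sec_p2

section Sec_p3
open scoped Convolution

theorem aux_diverg_cont {n : ℕ} {φ : EuclideanSpace ℝ (Fin n) → EuclideanSpace ℝ (Fin n)}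
    (hφ : ContDiff ℝ 1 φ) : Continuous (diverg φ) := by
  unfold diverg
  refine continuous_finsetSum _ fun i _ => ?_
  have h1 : Continuous fun x => fderiv ℝ φ x (EuclideanSpace.single i (1:ℝ)) :=
    (hφ.continuous_fderiv one_ne_zero).clm_apply continuous_const
  exact (EuclideanSpace.proj i : EuclideanSpace ℝ (Fin n) →L[ℝ] ℝ).continuous.comp h1

theorem aux_diverg_supp {n : ℕ} {φ : EuclideanSpace ℝ (Fin n) → EuclideanSpace ℝ (Fin n)}
    (cφ : HasCompactSupport φ) : HasCompactSupport (diverg φ) := by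
  have h := cφ.fderiv ℝ
  refine h.comp_left (g := fun L : EuclideanSpace ℝ (Fin n) →L[ℝ] EuclideanSpace ℝ (Fin n) =>
    ∑ i, L (EuclideanSpace.single i (1:ℝ)) i) ?_
  simp

theorem aux_ibp {n : ℕ} (v : EuclideanSpace ℝ (Fin n) → ℝ)
    (φ : EuclideanSpace ℝ (Fin n) → EuclideanSpace ℝ (Fin n))
    (hv : ContDiff ℝ 1 v) (hφ : ContDiff ℝ 1 φ) (cφ : HasCompactSupport φ) :
    ∫ x, v x * diverg φ x = - ∫ x, fderiv ℝ v x (φ x) := by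
  have hφi : ∀ i, ContDiff ℝ 1 fun x => φ x i := fun i =>
    (EuclideanSpace.proj i : EuclideanSpace ℝ (Fin n) →L[ℝ] ℝ).contDiff.comp hφ
  have cφi : ∀ i, HasCompactSupport fun x => φ x i := fun i =>
    cφ.comp_left (g := fun y : EuclideanSpace ℝ (Fin n) => y i) (by simp)
  have der : ∀ i x y, fderiv ℝ φ x y i = fderiv ℝ (fun x => φ x i) x y := by
    intro i x y
    have h1 : HasFDerivAt φ (fderiv ℝ φ x) x := (hφ.differentiable one_ne_zero x).hasFDerivAt
    have h2 := ((EuclideanSpace.proj i : EuclideanSpace ℝ (Fin n) →L[ℝ] ℝ).hasFDerivAt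
      (x := φ x)).comp x h1
    have h3 := h2.fderiv
    have h4 : (fun x => φ x i) = (EuclideanSpace.proj i : EuclideanSpace ℝ (Fin n) →L[ℝ] ℝ) ∘ φ := rfl
    rw [h4, h3]
    simp
  have cd := hv.continuous_fderiv one_ne_zero
  have i1 : ∀ i : Fin n, Integrable fun x =>
      fderiv ℝ v x (EuclideanSpace.single i (1:ℝ)) * φ x i := fun i =>
    ((cd.clm_apply continuous_const).mul (hφi i).continuous).integrable_of_hasCompactSupport
      (cφi i).mul_left
  have i2 : ∀ i : Fin n, Integrable fun x =>
      v x * fderiv ℝ (fun x => φ x i) x (EuclideanSpace.single i (1:ℝ)) := fun i => by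
    refine (hv.continuous.mul (((hφi i).continuous_fderiv one_ne_zero).clm_apply
      continuous_const)).integrable_of_hasCompactSupport (HasCompactSupport.mul_left ?_)
    exact ((cφi i).fderiv ℝ).comp_left
      (g := fun L : EuclideanSpace ℝ (Fin n) →L[ℝ] ℝ => L (EuclideanSpace.single i (1:ℝ))) (by simp)
  have i3 : ∀ i : Fin n, Integrable fun x => v x * φ x i := fun i =>
    (hv.continuous.mul (hφi i).continuous).integrable_of_hasCompactSupport (cφi i).mul_left
  have lhs : ∫ x, v x * diverg φ x = ∑ i, ∫ x, v x *
      fderiv ℝ (fun x => φ x i) x (EuclideanSpace.single i (1:ℝ)) := by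
    rw [← integral_finsetSum _ (fun i _ => i2 i)]
    congr 1; ext x
    rw [diverg, Finset.mul_sum]
    simp_rw [der]
  have rhs : ∫ x, fderiv ℝ v x (φ x) = ∑ i, ∫ x,
      fderiv ℝ v x (EuclideanSpace.single i (1:ℝ)) * φ x i := by
    rw [← integral_finsetSum _ (fun i _ => i1 i)]
    congr 1; ext x
    conv_lhs => rw [← (EuclideanSpace.basisFun (Fin n) ℝ).sum_repr (φ x)]
    simp [mul_comm]
  rw [lhs, rhs, ← Finset.sum_neg_distrib]
  refine Finset.sum_congr rfl fun i _ => ?_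
  exact integral_mul_fderiv_eq_neg_fderiv_mul_of_integrable (i1 i) (i2 i) (i3 i)
    (fun x _ => hv.differentiable one_ne_zero x) (fun x _ => (hφi i).differentiable one_ne_zero x)

/-- total gradient bounded by the variation -/
theorem aux_grad_le {n : ℕ} (v : EuclideanSpace ℝ (Fin n) → ℝ) (hv : ContDiff ℝ 2 v)
    (cv : HasCompactSupport v) (V : ℝ) (hV : ∀ p ∈ varSet v, p ≤ V) :
    ∫ x, ‖fderiv ℝ v x‖ ≤ V := by
  have hv1 : ContDiff ℝ 1 v := hv.of_le (by norm_num)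
  have cd : Continuous (fderiv ℝ v) := hv1.continuous_fderiv one_ne_zero
  have csd : HasCompactSupport (fderiv ℝ v) := cv.fderiv ℝ
  set K := tsupport (fderiv ℝ v) with hK
  have vK : volume K ≠ ∞ := csd.isCompact.measure_lt_top.ne
  have ind : Integrable (fun x => ‖fderiv ℝ v x‖) := (cd.integrable_of_hasCompactSupport csd).norm
  set p : EuclideanSpace ℝ (Fin n) → EuclideanSpace ℝ (Fin n) := fun x =>
    (InnerProductSpace.toDual ℝ (EuclideanSpace ℝ (Fin n))).symm (fderiv ℝ v x) with hp
  have pC : ContDiff ℝ 1 p := by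
    have : ContDiff ℝ 1 (fderiv ℝ v) := hv.fderiv_right (by norm_num)
    exact (InnerProductSpace.toDual ℝ (EuclideanSpace ℝ (Fin n))).symm.toContinuousLinearEquiv.contDiff.comp this
  have pn : ∀ x, ‖p x‖ = ‖fderiv ℝ v x‖ := fun x => by simp [hp]
  have pa : ∀ x, fderiv ℝ v x (p x) = ‖p x‖ ^ 2 := by
    intro x
    have : fderiv ℝ v x (p x) = inner ℝ (p x) (p x) :=
      (InnerProductSpace.toDual_symm_apply (x := p x) (y := fderiv ℝ v x)).symm
    rw [this, real_inner_self_eq_norm_sq]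
  have cp : HasCompactSupport p := csd.comp_left
    (g := (InnerProductSpace.toDual ℝ (EuclideanSpace ℝ (Fin n))).symm) (by simp)
  have main : ∀ ε : ℝ, 0 < ε → ∫ x, ‖fderiv ℝ v x‖ ≤ V + ε * volume.real K := by
    intro ε hε
    set φ : EuclideanSpace ℝ (Fin n) → EuclideanSpace ℝ (Fin n) := fun x =>
      (-(Real.sqrt (‖p x‖ ^ 2 + ε ^ 2))⁻¹) • p x with hφ
    have spos : ∀ x, 0 < Real.sqrt (‖p x‖ ^ 2 + ε ^ 2) := fun x => Real.sqrt_pos.2 (by positivity)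
    have sle : ∀ x, ‖p x‖ ≤ Real.sqrt (‖p x‖ ^ 2 + ε ^ 2) := fun x =>
      Real.le_sqrt_of_sq_le (by nlinarith)
    have sle2 : ∀ x, Real.sqrt (‖p x‖ ^ 2 + ε ^ 2) ≤ ‖p x‖ + ε := fun x => by
      apply Real.sqrt_le_iff.2 ⟨by positivity, by nlinarith [norm_nonneg (p x)]⟩
    have φC : ContDiff ℝ 1 φ := by
      refine ContDiff.smul (ContDiff.neg (ContDiff.inv (ContDiff.sqrt ?_ ?_) ?_)) pC
      · exact (pC.norm_sq ℝ).add contDiff_const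
      · intro x; positivity
      · intro x; exact (spos x).ne'
    have cφ : HasCompactSupport φ := by
      refine cp.mono ?_
      intro x hx hx'
      apply hx
      simp only [hφ, hx', smul_zero]
    have nφ : ∀ x, ‖φ x‖ ≤ 1 := by
      intro x
      rw [hφ]; simp only
      rw [norm_smul, norm_neg, norm_inv, Real.norm_of_nonneg (spos x).le, inv_mul_le_iff₀ (spos x)]
      simpa using sle x
    have h1 := hV _ ⟨φ, φC, cφ, nφ, rfl⟩
    rw [aux_ibp v φ hv1 φC cφ] at h1
    have h2 : ∀ x, - fderiv ℝ v x (φ x) = (Real.sqrt (‖p x‖ ^ 2 + ε ^ 2))⁻¹ * ‖p x‖ ^ 2 := by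
      intro x
      rw [hφ]; simp only [map_smul, smul_eq_mul]
      rw [pa]; ring
    rw [← integral_neg] at h1
    have iφ : Integrable fun x => - fderiv ℝ v x (φ x) :=
      ((cd.clm_apply φC.continuous).integrable_of_hasCompactSupport (by
        refine cφ.mono ?_
        intro x hx hx'
        apply hx
        simp only [hx', map_zero])).neg
    have iK : Integrable (K.indicator fun _ => ε) :=
      (integrable_indicator_iff (isClosed_tsupport _).measurableSet).2 (integrableOn_const vK)
    have h3 : ∫ x, ‖fderiv ℝ v x‖ ≤ ∫ x, (- fderiv ℝ v x (φ x) + K.indicator (fun _ => ε) x) := by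
      refine integral_mono ind (iφ.add iK) fun x => ?_
      simp only
      rw [h2, ← pn]
      by_cases hx : x ∈ K
      · rw [indicator_of_mem hx]
        have a1 := sle2 x
        have a2 := spos x
        set s := Real.sqrt (‖p x‖ ^ 2 + ε ^ 2)
        have a3 : s ^ 2 = ‖p x‖ ^ 2 + ε ^ 2 := Real.sq_sqrt (by positivity)
        have a4 := sle x
        have : ‖p x‖ - ε ≤ s⁻¹ * ‖p x‖ ^ 2 := by
          rw [le_inv_mul_iff₀ a2]
          by_cases hq : ‖p x‖ ≤ ε
          · nlinarith [sq_nonneg ‖p x‖]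
          · nlinarith
        linarith
      · have : fderiv ℝ v x = 0 := image_eq_zero_of_notMem_tsupport hx
        have : ‖p x‖ = 0 := by rw [pn, this, norm_zero]
        simp [hx, this]
    rw [integral_add iφ iK, integral_indicator_const _ (isClosed_tsupport _).measurableSet] at h3
    rw [smul_eq_mul] at h3
    linarith
  have lim : Tendsto (fun ε : ℝ => V + ε * volume.real K) (𝓝[>] 0) (𝓝 (V + 0 * volume.real K)) := by
    have : Continuous fun ε : ℝ => V + ε * volume.real K := by fun_prop
    exact (this.tendsto 0).mono_left nhdsWithin_le_nhds
  rw [zero_mul, add_zero] at lim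
  exact ge_of_tendsto lim (eventually_nhdsWithin_of_forall fun ε hε => main ε hε)

/-- variation of a mollification -/
theorem aux_moll_var {n : ℕ} (w : EuclideanSpace ℝ (Fin n) → ℝ) (hw : Integrable w)
    (V : ℝ) (hV : ∀ p ∈ varSet w, p ≤ V) (ρ : ContDiffBump (0 : EuclideanSpace ℝ (Fin n))) :
    ∀ p ∈ varSet ((ρ.normed volume) ⋆[ContinuousLinearMap.lsmul ℝ ℝ, volume] w), p ≤ V := by
  rintro _ ⟨φ, hφ, cφ, nφ, rfl⟩
  have Dc := aux_diverg_cont hφ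
  have Ds := aux_diverg_supp cφ
  set D := diverg φ with hD
  set r := ρ.normed volume with hr
  have ri : Integrable r := ρ.integrable_normed
  have I0 : Integrable (fun q : EuclideanSpace ℝ (Fin n) × EuclideanSpace ℝ (Fin n) =>
      r q.2 * w (q.1 - q.2)) (volume.prod volume) := by
    simpa using ri.convolution_integrand (ContinuousLinearMap.lsmul ℝ ℝ) hw
  obtain ⟨B, hB⟩ := Ds.exists_bound_of_continuous Dc
  have I1 : Integrable (fun q : EuclideanSpace ℝ (Fin n) × EuclideanSpace ℝ (Fin n) =>
      r q.2 * w (q.1 - q.2) * D q.1) (volume.prod volume) := by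
    refine I0.mul_bdd (c := B) (Dc.comp continuous_fst).aestronglyMeasurable ?_
    exact Eventually.of_forall fun q => hB q.1
  have e1 : ∀ x, (r ⋆[ContinuousLinearMap.lsmul ℝ ℝ, volume] w) x * D x
      = ∫ t, r t * w (x - t) * D x := by
    intro x
    rw [convolution_def, ← integral_mul_const]
    simp
  simp_rw [e1]
  rw [integral_integral_swap I1]
  have tr : ∀ t, ∫ x, w (x - t) * D x ≤ V := by
    intro t
    have : ∫ x, w (x - t) * D x = ∫ x, w x * D (x + t) := by
      rw [← integral_add_right_eq_self _ t]
      simp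
    rw [this]
    refine hV _ ⟨fun x => φ (x + t), hφ.comp (contDiff_id.add contDiff_const), ?_, fun x => nφ _, ?_⟩
    · exact cφ.comp_homeomorph (Homeomorph.addRight t)
    · congr 1; ext x; congr 1
      rw [hD, diverg, diverg]
      simp_rw [fderiv_comp_add_right]
  have e2 : ∀ t, ∫ x, r t * w (x - t) * D x = r t * ∫ x, w (x - t) * D x := by
    intro t
    rw [← integral_const_mul]; congr 1; ext x; ring
  have h3 : ∫ t, ∫ x, r t * w (x - t) * D x ≤ ∫ t, r t * V := by
    refine integral_mono I1.integral_prod_right (ri.mul_const V) fun t => ?_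
    simp only
    rw [e2]
    exact mul_le_mul_of_nonneg_left (tr t) (ρ.nonneg_normed t)
  refine h3.trans (le_of_eq ?_)
  rw [integral_mul_const, ρ.integral_normed, one_mul]

end Sec_p3

section Sec_p4
open scoped Convolution

def auxF (c ε t : ℝ) : ℝ :=
  (Real.sqrt ((t - c) ^ 2 + ε ^ 2) + (t - c)) / 2 - (Real.sqrt (c ^ 2 + ε ^ 2) - c) / 2

def auxF' (c ε t : ℝ) : ℝ := ((t - c) / Real.sqrt ((t - c) ^ 2 + ε ^ 2) + 1) / 2

theorem auxF_zero (c ε : ℝ) : auxF c ε 0 = 0 := by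
  unfold auxF
  have : (0 - c) ^ 2 = c ^ 2 := by ring
  rw [this]; ring

theorem auxF_contDiff (c ε : ℝ) (hε : 0 < ε) : ContDiff ℝ 1 (auxF c ε) := by
  unfold auxF
  have : ContDiff ℝ 1 fun t : ℝ => Real.sqrt ((t - c) ^ 2 + ε ^ 2) :=
    ContDiff.sqrt (by fun_prop) (fun x => by positivity)
  fun_prop

theorem auxF_deriv (c ε t : ℝ) (hε : 0 < ε) : HasDerivAt (auxF c ε) (auxF' c ε t) t := by
  unfold auxF auxF'
  have h0 : HasDerivAt (fun t : ℝ => t - c) 1 t := (hasDerivAt_id t).sub_const c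
  have h1 : HasDerivAt (fun t : ℝ => (t - c) ^ 2 + ε ^ 2) (2 * (t - c)) t := by
    simpa using (h0.pow 2).add_const (ε ^ 2)
  have h2 := h1.sqrt (by positivity)
  have h3 := ((h2.add h0).div_const 2).sub_const ((Real.sqrt (c ^ 2 + ε ^ 2) - c) / 2)
  refine h3.congr_deriv ?_
  congr 2
  exact mul_div_mul_left _ _ two_ne_zero

theorem auxF_sqrt_bounds (a ε : ℝ) (hε : 0 < ε) :
    |a| ≤ Real.sqrt (a ^ 2 + ε ^ 2) ∧ Real.sqrt (a ^ 2 + ε ^ 2) ≤ |a| + ε := by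
  constructor
  · exact Real.le_sqrt_of_sq_le (by rw [sq_abs]; nlinarith)
  · exact Real.sqrt_le_iff.2 ⟨by positivity, by nlinarith [abs_nonneg a, sq_abs a]⟩

theorem auxF'_bounds (c ε t : ℝ) (hε : 0 < ε) : 0 ≤ auxF' c ε t ∧ auxF' c ε t ≤ 1 := by
  unfold auxF'
  have hs : 0 < Real.sqrt ((t - c) ^ 2 + ε ^ 2) := Real.sqrt_pos.2 (by positivity)
  obtain ⟨h1, -⟩ := auxF_sqrt_bounds (t - c) ε hε
  have h2 : |(t - c) / Real.sqrt ((t - c) ^ 2 + ε ^ 2)| ≤ 1 := by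
    rw [abs_div, abs_of_pos hs, div_le_one hs]; exact h1
  rw [abs_le] at h2
  constructor <;> linarith [h2.1, h2.2]

theorem auxF_approx (c ε t : ℝ) (hε : 0 < ε) (hc : 0 ≤ c) :
    |auxF c ε t - max (t - c) 0| ≤ ε := by
  unfold auxF
  have h1 := auxF_sqrt_bounds (t - c) ε hε
  have h2 := auxF_sqrt_bounds c ε hε
  rw [abs_of_nonneg hc] at h2
  have h3 : max (t - c) 0 = (|t - c| + (t - c)) / 2 := by
    rcases le_total 0 (t - c) with h | h
    · rw [abs_of_nonneg h, max_eq_left h]; ring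
    · rw [abs_of_nonpos h, max_eq_right h]; ring
  rw [h3, abs_le]
  constructor <;> linarith [h1.1, h1.2, h2.1, h2.2]

theorem auxF_mono (c ε : ℝ) (hε : 0 < ε) : Monotone (auxF c ε) :=
  monotone_of_deriv_nonneg (fun t => (auxF_deriv c ε t hε).differentiableAt)
    fun t => by rw [(auxF_deriv c ε t hε).deriv]; exact (auxF'_bounds c ε t hε).1

theorem auxG_mono (c ε : ℝ) (hε : 0 < ε) : Monotone (fun t => t - auxF c ε t) := by
  have hd : ∀ t, HasDerivAt (fun t => t - auxF c ε t) (1 - auxF' c ε t) t := fun t =>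
    (hasDerivAt_id t).sub (auxF_deriv c ε t hε)
  exact monotone_of_deriv_nonneg (fun t => (hd t).differentiableAt)
    fun t => by rw [(hd t).deriv]; linarith [(auxF'_bounds c ε t hε).2]

theorem auxF_bounds (c ε t : ℝ) (hε : 0 < ε) (ht : 0 ≤ t) : 0 ≤ auxF c ε t ∧ auxF c ε t ≤ t := by
  have h1 := auxF_mono c ε hε ht
  have h2 := auxG_mono c ε hε ht
  simp only [auxF_zero] at h1 h2
  constructor <;> linarith

theorem aux_smooth_step {n : ℕ} (hn : 2 ≤ n) (v : EuclideanSpace ℝ (Fin n) → ℝ)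
    (hv : ContDiff ℝ 1 v) (cv : HasCompactSupport v) (v0 : ∀ x, 0 ≤ v x) (V : ℝ)
    (hV : ∫ x, ‖fderiv ℝ v x‖ ≤ V) (c ε : ℝ) (hε : 0 < ε)
    (φ : EuclideanSpace ℝ (Fin n) → EuclideanSpace ℝ (Fin n))
    (hφ : ContDiff ℝ 1 φ) (cφ : HasCompactSupport φ) (nφ : ∀ x, ‖φ x‖ ≤ 1) :
    ∫ x, auxF c ε (v x) * diverg φ x ≤ V ∧
    ENNReal.ofReal (n * omegaN n ^ ((1 : ℝ) / n)) *
      ∫⁻ ξ in Ioi (0 : ℝ), volume {x | ξ < v x - auxF c ε (v x)} ^ (1 - (1 : ℝ) / n)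
      ≤ ENNReal.ofReal (V - ∫ x, auxF c ε (v x) * diverg φ x) := by
  have cd : Continuous (fderiv ℝ v) := hv.continuous_fderiv one_ne_zero
  have csd : HasCompactSupport (fderiv ℝ v) := cv.fderiv ℝ
  have ind : Integrable (fun x => ‖fderiv ℝ v x‖) := (cd.integrable_of_hasCompactSupport csd).norm
  have FC : ContDiff ℝ 1 fun x => auxF c ε (v x) := (auxF_contDiff c ε hε).comp hv
  have F'c : Continuous fun x => auxF' c ε (v x) := by
    have : Continuous (auxF' c ε) := by
      unfold auxF'
      refine Continuous.div_const (Continuous.add (Continuous.div (by fun_prop) (by fun_prop) ?_)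
        continuous_const) 2
      intro t
      exact (Real.sqrt_pos.2 (by positivity)).ne'
    exact this.comp hv.continuous
  have dF : ∀ x, HasFDerivAt (fun x => auxF c ε (v x)) (auxF' c ε (v x) • fderiv ℝ v x) x := fun x =>
    (auxF_deriv c ε (v x) hε).comp_hasFDerivAt x (hv.differentiable one_ne_zero x).hasFDerivAt
  have dG : ∀ x, HasFDerivAt (fun x => v x - auxF c ε (v x))
      ((1 - auxF' c ε (v x)) • fderiv ℝ v x) x := fun x => by
    have := (hv.differentiable one_ne_zero x).hasFDerivAt.sub (dF x)
    refine this.congr_fderiv ?_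
    rw [sub_smul, one_smul]
  have iF : Integrable fun x => auxF' c ε (v x) * ‖fderiv ℝ v x‖ :=
    (F'c.mul cd.norm).integrable_of_hasCompactSupport csd.norm.mul_left
  have b1 : ∫ x, auxF c ε (v x) * diverg φ x ≤ ∫ x, auxF' c ε (v x) * ‖fderiv ℝ v x‖ := by
    rw [aux_ibp _ φ FC hφ cφ, ← integral_neg]
    refine integral_mono (Integrable.neg ?_) iF fun x => ?_
    · refine ((FC.continuous_fderiv one_ne_zero).clm_apply
        hφ.continuous).integrable_of_hasCompactSupport ?_
      refine cφ.mono ?_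
      intro x hx hx'
      apply hx
      simp only [hx', map_zero]
    · simp only
      rw [(dF x).fderiv]
      simp only [FunLike.coe_smul, Pi.smul_apply, smul_eq_mul]
      rw [← mul_neg]
      refine mul_le_mul_of_nonneg_left ?_ (auxF'_bounds c ε _ hε).1
      refine (neg_le_abs _).trans ?_
      have := (fderiv ℝ v x).le_opNorm (φ x)
      rw [Real.norm_eq_abs] at this
      refine this.trans ?_
      exact mul_le_of_le_one_right (norm_nonneg _) (nφ x)
  have iso := aux_iso_C1 hn (fun x => v x - auxF c ε (v x)) (hv.sub FC)
    (cv.comp_left (g := fun t => t - auxF c ε t) (by simp [auxF_zero]))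
    (fun x => by linarith [(auxF_bounds c ε (v x) hε (v0 x)).2])
  have eG : ∫ x, ‖fderiv ℝ (fun x => v x - auxF c ε (v x)) x‖
      = (∫ x, ‖fderiv ℝ v x‖) - ∫ x, auxF' c ε (v x) * ‖fderiv ℝ v x‖ := by
    rw [← integral_sub ind iF]
    congr 1; ext x
    rw [(dG x).fderiv, norm_smul, Real.norm_of_nonneg (by linarith [(auxF'_bounds c ε (v x) hε).2])]
    ring
  rw [eG] at iso
  constructor
  · refine (b1.trans ?_).trans hV
    refine integral_mono iF ind fun x => ?_
    exact mul_le_of_le_one_left (norm_nonneg _) (auxF'_bounds c ε _ hε).2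
  · refine iso.trans (ENNReal.ofReal_le_ofReal ?_)
    linarith

theorem aux_measure_liminf {α : Type*} [MeasurableSpace α] (m : Measure α) (S : Set α)
    (T : ℕ → Set α) (hT : ∀ k, MeasurableSet (T k))
    (h : ∀ᵐ x ∂m, x ∈ S → ∀ᶠ k in atTop, x ∈ T k) :
    m S ≤ liminf (fun k => m (T k)) atTop := by
  have mL : MeasurableSet (liminf T atTop) := MeasurableSet.measurableSet_liminf hT
  have h1 : m S ≤ m (liminf T atTop) := by
    refine measure_mono_ae ?_
    filter_upwards [h] with x hx hxS
    exact mem_liminf_iff_eventually_mem.2 (hx hxS)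
  refine h1.trans ?_
  rw [← lintegral_indicator_one mL]
  calc ∫⁻ x, (liminf T atTop).indicator 1 x ∂m
      ≤ ∫⁻ x, liminf (fun k => (T k).indicator (1 : α → ℝ≥0∞) x) atTop ∂m := by
        refine lintegral_mono fun x => ?_
        by_cases hx : x ∈ liminf T atTop
        · rw [indicator_of_mem hx]
          refine le_liminf_of_le (by isBoundedDefault) ?_
          filter_upwards [mem_liminf_iff_eventually_mem.1 hx] with k hk
          rw [indicator_of_mem hk]
        · rw [indicator_of_notMem hx]; exact zero_le
    _ ≤ liminf (fun k => ∫⁻ x, (T k).indicator (1 : α → ℝ≥0∞) x ∂m) atTop :=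
        lintegral_liminf_le fun k => measurable_one.indicator (hT k)
    _ = _ := by
        congr 1; ext k; rw [lintegral_indicator_one (hT k)]

theorem aux_key {n : ℕ} (hn : 2 ≤ n) (w : EuclideanSpace ℝ (Fin n) → ℝ) (hw : Integrable w)
    (cw : HasCompactSupport w) (w0 : ∀ x, 0 ≤ w x) (M : ℝ) (wM : ∀ x, w x ≤ M) (V : ℝ)
    (hV : ∀ p ∈ varSet w, p ≤ V) (c : ℝ) (hc : 0 ≤ c)
    (φ : EuclideanSpace ℝ (Fin n) → EuclideanSpace ℝ (Fin n))
    (hφ : ContDiff ℝ 1 φ) (cφ : HasCompactSupport φ) (nφ : ∀ x, ‖φ x‖ ≤ 1) :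
    ∫ x, max (w x - c) 0 * diverg φ x ≤ V ∧
    ENNReal.ofReal (n * omegaN n ^ ((1 : ℝ) / n)) *
      ∫⁻ ξ in Ioo (0 : ℝ) c, volume {x | ξ < w x} ^ (1 - (1 : ℝ) / n)
      ≤ ENNReal.ofReal (V - ∫ x, max (w x - c) 0 * diverg φ x) := by
  have hn1 : (1 : ℝ) < n := by exact_mod_cast hn
  have hp : 0 ≤ 1 - (1 : ℝ) / n := by
    rw [sub_nonneg, div_le_one (by linarith)]; exact hn1.le
  set ε : ℕ → ℝ := fun k => 1 / ((k : ℝ) + 1) with hεdef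
  have εpos : ∀ k, 0 < ε k := fun k => by positivity
  have εlim : Tendsto ε atTop (𝓝 0) := tendsto_one_div_add_atTop_nhds_zero_nat
  set ρ : ℕ → ContDiffBump (0 : EuclideanSpace ℝ (Fin n)) := fun k =>
    ⟨ε k, 2 * ε k, εpos k, by linarith [εpos k]⟩ with hρ
  set W : ℕ → EuclideanSpace ℝ (Fin n) → ℝ := fun k =>
    ((ρ k).normed volume) ⋆[ContinuousLinearMap.lsmul ℝ ℝ, volume] w with hW
  have Wlim : ∀ᵐ x, Tendsto (fun k => W k x) atTop (𝓝 (w x)) := by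
    refine ContDiffBump.ae_convolution_tendsto_right_of_locallyIntegrable (K := 2) ?_ ?_
      hw.locallyIntegrable
    · simpa using εlim.const_mul 2
    · exact Eventually.of_forall fun k => le_rfl
  have WC : ∀ k, ContDiff ℝ 2 (W k) := fun k =>
    (ρ k).hasCompactSupport_normed.contDiff_convolution_left (n := 2) _ (ρ k).contDiff_normed
      hw.locallyIntegrable
  have Wcs : ∀ k, HasCompactSupport (W k) := fun k =>
    (ρ k).hasCompactSupport_normed.convolution _ cw
  have W0 : ∀ k x, 0 ≤ W k x := fun k x => by
    rw [hW]; simp only [convolution_def, ContinuousLinearMap.lsmul_apply, smul_eq_mul]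
    exact integral_nonneg fun t => mul_nonneg ((ρ k).nonneg_normed t) (w0 _)
  have WM : ∀ k x, W k x ≤ M := fun k x => by
    rw [hW]; simp only [convolution_def, ContinuousLinearMap.lsmul_apply, smul_eq_mul]
    have : ∫ t, (ρ k).normed volume t * w (x - t) ≤ ∫ t, (ρ k).normed volume t * M := by
      refine integral_mono_of_nonneg
        (Eventually.of_forall fun t => mul_nonneg ((ρ k).nonneg_normed t) (w0 _))
        ((ρ k).integrable_normed.mul_const M)
        (Eventually.of_forall fun t => mul_le_mul_of_nonneg_left (wM _) ((ρ k).nonneg_normed t))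
    rwa [integral_mul_const, (ρ k).integral_normed, one_mul] at this
  have WV : ∀ k, ∫ x, ‖fderiv ℝ (W k) x‖ ≤ V := fun k =>
    aux_grad_le (W k) (WC k) (Wcs k) V (aux_moll_var w hw V hV (ρ k))
  have step := fun k => aux_smooth_step hn (W k) ((WC k).of_le (by norm_num)) (Wcs k) (W0 k) V
    (WV k) c (ε k) (εpos k) φ hφ cφ nφ
  have Flim : ∀ᵐ x, Tendsto (fun k => auxF c (ε k) (W k x)) atTop (𝓝 (max (w x - c) 0)) := by
    filter_upwards [Wlim] with x hx
    have h1 : Tendsto (fun k => max (W k x - c) 0) atTop (𝓝 (max (w x - c) 0)) :=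
      (hx.sub_const c).max tendsto_const_nhds
    have h2 : Tendsto (fun k => auxF c (ε k) (W k x) - max (W k x - c) 0) atTop (𝓝 0) :=
      squeeze_zero_norm (fun k => auxF_approx c (ε k) (W k x) (εpos k) hc) εlim
    simpa using h2.add h1
  have Dc := aux_diverg_cont hφ
  have Di : Integrable (diverg φ) := Dc.integrable_of_hasCompactSupport (aux_diverg_supp cφ)
  have Ilim : Tendsto (fun k => ∫ x, auxF c (ε k) (W k x) * diverg φ x) atTop
      (𝓝 (∫ x, max (w x - c) 0 * diverg φ x)) := by
    refine tendsto_integral_of_dominated_convergence (fun x => M * ‖diverg φ x‖) ?_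
      (Di.norm.const_mul M) ?_ ?_
    · intro k
      exact (((auxF_contDiff c (ε k) (εpos k)).continuous.comp (WC k).continuous).mul
        Dc).aestronglyMeasurable
    · intro k
      refine Eventually.of_forall fun x => ?_
      rw [norm_mul]
      refine mul_le_mul_of_nonneg_right ?_ (norm_nonneg _)
      have := auxF_bounds c (ε k) (W k x) (εpos k) (W0 k x)
      rw [Real.norm_of_nonneg this.1]
      exact this.2.trans (WM k x)
    · filter_upwards [Flim] with x hx
      exact hx.mul_const _
  constructor
  · exact le_of_tendsto' Ilim fun k => (step k).1
  set T : ℕ → ℝ → Set (EuclideanSpace ℝ (Fin n)) := fun k ξ =>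
    {x | ξ < W k x - auxF c (ε k) (W k x)} with hTdef
  have Tm : ∀ k ξ, MeasurableSet (T k ξ) := fun k ξ => by
    refine (isOpen_lt continuous_const ?_).measurableSet
    exact (WC k).continuous.sub
      ((auxF_contDiff c (ε k) (εpos k)).continuous.comp (WC k).continuous)
  have vol : ∀ ξ ∈ Ioo (0 : ℝ) c, volume {x | ξ < w x} ≤ liminf (fun k => volume (T k ξ)) atTop := by
    intro ξ hξ
    apply aux_measure_liminf volume _ _ (fun k => Tm k ξ)
    filter_upwards [Wlim, Flim] with x h1 h2 hx
    have h3 := h1.sub h2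
    have h4 : ξ < w x - max (w x - c) 0 := by
      have hx' : ξ < w x := hx
      rcases max_cases (w x - c) 0 with h | h <;> linarith [h.1, hξ.2]
    exact h3.eventually (lt_mem_nhds h4)
  have Vlim : Tendsto (fun k => ENNReal.ofReal (V - ∫ x, auxF c (ε k) (W k x) * diverg φ x)) atTop
      (𝓝 (ENNReal.ofReal (V - ∫ x, max (w x - c) 0 * diverg φ x))) :=
    ENNReal.tendsto_ofReal (Ilim.const_sub V)
  set C := ENNReal.ofReal (n * omegaN n ^ ((1 : ℝ) / n)) with hC
  have mT : ∀ k, Measurable fun ξ : ℝ => volume (T k ξ) ^ (1 - (1 : ℝ) / n) := fun k =>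
    (aux_meas_lt volume _).pow_const _
  calc C * ∫⁻ ξ in Ioo (0 : ℝ) c, volume {x | ξ < w x} ^ (1 - (1 : ℝ) / n)
      = ∫⁻ ξ in Ioo (0 : ℝ) c, C * volume {x | ξ < w x} ^ (1 - (1 : ℝ) / n) := by
        rw [lintegral_const_mul _ ((aux_meas_lt volume w).pow_const _)]
    _ ≤ ∫⁻ ξ in Ioo (0 : ℝ) c, liminf (fun k => C * volume (T k ξ) ^ (1 - (1 : ℝ) / n)) atTop := by
        refine setLIntegral_mono (Measurable.liminf fun k => (mT k).const_mul _) fun ξ hξ => ?_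
        have mono : Monotone fun t : ℝ≥0∞ => C * t ^ (1 - (1 : ℝ) / n) := fun s t hst =>
          mul_le_mul_right (ENNReal.rpow_le_rpow hst hp) _
        have cont : Continuous fun t : ℝ≥0∞ => C * t ^ (1 - (1 : ℝ) / n) :=
          (ENNReal.continuous_const_mul ENNReal.ofReal_ne_top).comp ENNReal.continuous_rpow_const
        refine (mono (vol ξ hξ)).trans (le_of_eq ?_)
        exact mono.map_liminf_of_continuousAt _ cont.continuousAt
    _ ≤ liminf (fun k => ∫⁻ ξ in Ioo (0 : ℝ) c, C * volume (T k ξ) ^ (1 - (1 : ℝ) / n)) atTop :=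
        lintegral_liminf_le fun k => (mT k).const_mul _
    _ ≤ liminf (fun k => ENNReal.ofReal (V - ∫ x, auxF c (ε k) (W k x) * diverg φ x)) atTop := by
        refine liminf_le_liminf (Eventually.of_forall fun k => ?_)
        refine le_trans ?_ (step k).2
        rw [lintegral_const_mul _ (mT k)]
        exact mul_le_mul_right (lintegral_mono_set fun x hx => hx.1) _
    _ = _ := Vlim.liminf_eq

end Sec_p4

section Sec_p5

theorem aux_measure_le_of_Iic (σ ν : Measure ℝ) (hσ : ∀ x, σ (Iic x) ≠ ∞) (hν : ∀ x, ν (Iic x) ≠ ∞)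
    (h : ∀ a b : ℝ, a ≤ b → ν (Ioc a b) ≤ σ (Ioc a b)) : ν ≤ σ := by
  have split : ∀ (m : Measure ℝ), (∀ x, m (Iic x) ≠ ∞) → ∀ a b : ℝ, a ≤ b →
      (m (Iic b)).toReal - (m (Iic a)).toReal = (m (Ioc a b)).toReal := by
    intro m hm a b hab
    have e : m (Iic b) = m (Iic a) + m (Ioc a b) := by
      rw [← Iic_union_Ioc_eq_Iic hab, measure_union _ measurableSet_Ioc]
      rw [Set.disjoint_left]; intro x hx hx'; exact absurd hx'.1 (not_lt.2 hx)
    have f : m (Ioc a b) ≠ ∞ := ne_top_of_le_ne_top (hm b) (measure_mono fun x hx => hx.2)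
    rw [e, ENNReal.toReal_add (hm a) f]; ring
  have rc : ∀ (m : Measure ℝ), (∀ x, m (Iic x) ≠ ∞) → ∀ a : ℝ,
      Tendsto (fun x => (m (Iic x)).toReal) (𝓝[>] a) (𝓝 (m (Iic a)).toReal) := by
    intro m hm a
    have h1 := tendsto_measure_biInter_gt (μ := m) (s := fun x : ℝ => Iic x) (a := a)
      (fun r _ => measurableSet_Iic.nullMeasurableSet) (fun i j _ hij => Iic_subset_Iic.2 hij)
      ⟨a + 1, by simp, hm _⟩
    have h2 : (⋂ r > a, Iic r) = Iic a := by
      ext x; simp only [mem_iInter, mem_Iic]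
      exact ⟨fun hx => le_of_forall_gt_imp_ge_of_dense hx, fun hx r hr => hx.trans hr.le⟩
    rw [h2] at h1
    exact (ENNReal.tendsto_toReal (hm a)).comp h1
  let D : StieltjesFunction ℝ :=
    { toFun := fun x => (σ (Iic x)).toReal - (ν (Iic x)).toReal
      mono' := by
        intro a b hab
        have h1 := split σ hσ a b hab
        have h2 := split ν hν a b hab
        have h3 := ENNReal.toReal_mono
          (ne_top_of_le_ne_top (hσ b) (measure_mono fun x hx => hx.2)) (h a b hab)
        simp only
        linarith
      right_continuous' := by
        intro a
        have := (rc σ hσ a).sub (rc ν hν a)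
        rw [← continuousWithinAt_Ioi_iff_Ici]
        exact this }
  have lf : IsLocallyFiniteMeasure σ :=
    ⟨fun x => ⟨Iic (x + 1), Iic_mem_nhds (by linarith), (hσ _).lt_top⟩⟩
  have e : σ = D.measure + ν := by
    apply Measure.ext_of_Ioc
    intro a b hab
    rw [Measure.add_apply, StieltjesFunction.measure_Ioc]
    have f1 : σ (Ioc a b) ≠ ∞ := ne_top_of_le_ne_top (hσ b) (measure_mono fun x hx => hx.2)
    have f2 : ν (Ioc a b) ≠ ∞ := ne_top_of_le_ne_top (hν b) (measure_mono fun x hx => hx.2)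
    have h1 := split σ hσ a b hab.le
    have h2 := split ν hν a b hab.le
    have h3 := ENNReal.toReal_mono f1 (h a b hab.le)
    have h4 : D b - D a = (σ (Ioc a b)).toReal - (ν (Ioc a b)).toReal := by
      rw [← h1, ← h2]
      change ((σ (Iic b)).toReal - (ν (Iic b)).toReal) - ((σ (Iic a)).toReal - (ν (Iic a)).toReal) = _
      ring
    rw [h4, ENNReal.ofReal_sub _ ENNReal.toReal_nonneg, ENNReal.ofReal_toReal f1,
      ENNReal.ofReal_toReal f2, tsub_add_cancel_of_le (h a b hab.le)]
  rw [e]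
  exact Measure.le_add_left le_rfl

theorem aux_measure_le (σ ν : Measure ℝ) (hσ : ∀ s, 0 ≤ s → σ (Ioc 0 s) ≠ ∞)
    (hν : ∀ s, 0 ≤ s → ν (Ioc 0 s) ≠ ∞)
    (h : ∀ a b : ℝ, 0 ≤ a → a ≤ b → ν (Ioc a b) ≤ σ (Ioc a b)) (A : Set ℝ)
    (hA : MeasurableSet A) (hA0 : A ⊆ Ioi 0) : ν A ≤ σ A := by
  have fin : ∀ m : Measure ℝ, (∀ s, 0 ≤ s → m (Ioc 0 s) ≠ ∞) →
      ∀ x, (m.restrict (Ioi 0)) (Iic x) ≠ ∞ := by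
    intro m hm x
    rw [Measure.restrict_apply measurableSet_Iic]
    refine ne_top_of_le_ne_top (hm (max x 0) (le_max_right _ _)) (measure_mono ?_)
    rintro y ⟨hy, hy0⟩
    exact ⟨hy0, le_trans hy (le_max_left _ _)⟩
  have := aux_measure_le_of_Iic (σ.restrict (Ioi 0)) (ν.restrict (Ioi 0)) (fin σ hσ) (fin ν hν) (by
    intro a b hab
    rw [Measure.restrict_apply measurableSet_Ioc, Measure.restrict_apply measurableSet_Ioc]
    by_cases hb : 0 ≤ b
    · have : Ioc a b ∩ Ioi 0 = Ioc (max a 0) b := by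
        ext x; simp only [mem_inter_iff, mem_Ioc, mem_Ioi, max_lt_iff]; tauto
      rw [this]
      exact h _ _ (le_max_right _ _) (max_le hab hb)
    · have : Ioc a b ∩ Ioi 0 = ∅ := by
        ext x; simp only [mem_inter_iff, mem_Ioc, mem_Ioi, mem_empty_iff_false, iff_false]
        rintro ⟨⟨_, h1⟩, h2⟩; exact hb (h2.le.trans h1)
      simp [this]) A
  rwa [Measure.restrict_apply hA, Measure.restrict_apply hA, inter_eq_left.2 hA0] at this

theorem aux_varSet_zero {n : ℕ} (w : EuclideanSpace ℝ (Fin n) → ℝ) : (0 : ℝ) ∈ varSet w := by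
  refine ⟨fun _ => 0, contDiff_const, HasCompactSupport.zero, by simp, ?_⟩
  simp [diverg]

theorem aux_totalVar_nonneg {n : ℕ} (w : EuclideanSpace ℝ (Fin n) → ℝ) : 0 ≤ totalVar w :=
  Real.sSup_nonneg' ⟨0, aux_varSet_zero w, le_rfl⟩

theorem aux_varSet_congr {n : ℕ} {w w' : EuclideanSpace ℝ (Fin n) → ℝ} (h : w =ᵐ[volume] w') :
    varSet w = varSet w' := by
  have : ∀ φ : EuclideanSpace ℝ (Fin n) → EuclideanSpace ℝ (Fin n),
      ∫ x, w x * diverg φ x = ∫ x, w' x * diverg φ x := fun φ =>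
    integral_congr_ae (by filter_upwards [h] with x hx; rw [hx])
  unfold varSet
  simp_rw [this]

/-- comparison of variations of truncations (bounded case) -/
theorem aux_trunc {n : ℕ} (hn : 2 ≤ n) (u : EuclideanSpace ℝ (Fin n) → ℝ) (hu : IsBV u)
    (cu : HasCompactSupport u) (u0 : ∀ x, 0 ≤ u x) (M : ℝ) (uM : ∀ x, u x ≤ M)
    (t1 t2 : ℝ) (h1 : 0 ≤ t1) (h12 : t1 ≤ t2) :
    ENNReal.ofReal (n * omegaN n ^ ((1 : ℝ) / n)) *
      ∫⁻ ξ in Ioo t1 t2, volume {x | ξ < u x} ^ (1 - (1 : ℝ) / n)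
      ≤ ENNReal.ofReal (totalVar (fun x => max (u x - t1) 0)
        - totalVar (fun x => max (u x - t2) 0)) := by
  obtain ⟨ui, ub⟩ := hu
  set w : EuclideanSpace ℝ (Fin n) → ℝ := fun x => max (u x - t1) 0 with hw
  have wb : BddAbove (varSet w) := by
    refine ⟨totalVar u, ?_⟩
    rintro _ ⟨φ, hφ, cφ, nφ, rfl⟩
    exact (aux_key hn u ui cu u0 M uM (totalVar u) (fun p hp => le_csSup ub hp) t1 h1 φ hφ cφ nφ).1
  have w0 : ∀ x, 0 ≤ w x := fun x => le_max_right _ _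
  have wu : ∀ x, w x ≤ u x := fun x => max_le (by linarith) (u0 x)
  have wi : Integrable w := by
    refine ui.mono ((ui.aestronglyMeasurable.sub aestronglyMeasurable_const).sup
      aestronglyMeasurable_const) (Eventually.of_forall fun x => ?_)
    rw [Real.norm_of_nonneg (w0 x), Real.norm_of_nonneg (u0 x)]; exact wu x
  have cw : HasCompactSupport w := cu.comp_left (g := fun t => max (t - t1) 0) (by simpa using h1)
  have hc : 0 ≤ t2 - t1 := by linarith
  have key := aux_key hn w wi cw w0 M (fun x => (wu x).trans (uM x)) (totalVar w)
    (fun p hp => le_csSup wb hp) (t2 - t1) hc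
  have e1 : ∀ x, max (w x - (t2 - t1)) 0 = max (u x - t2) 0 := by
    intro x
    simp only [hw]
    rcases max_cases (u x - t1) 0 with h | h
    · rw [h.1]; congr 1; ring
    · rw [h.1, max_eq_right (by linarith), max_eq_right (by linarith)]
  simp_rw [e1] at key
  set X := ENNReal.ofReal (n * omegaN n ^ ((1 : ℝ) / n)) *
      ∫⁻ ξ in Ioo (0 : ℝ) (t2 - t1), volume {x | ξ < w x} ^ (1 - (1 : ℝ) / n) with hX
  have eX : ENNReal.ofReal (n * omegaN n ^ ((1 : ℝ) / n)) *
      ∫⁻ ξ in Ioo t1 t2, volume {x | ξ < u x} ^ (1 - (1 : ℝ) / n) = X := by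
    rw [hX]; congr 1
    rw [← lintegral_indicator measurableSet_Ioo, ← lintegral_indicator measurableSet_Ioo,
      ← lintegral_add_right_eq_self _ t1]
    congr 1; ext ξ
    by_cases hξ : ξ ∈ Ioo 0 (t2 - t1)
    · rw [indicator_of_mem hξ, indicator_of_mem (show ξ + t1 ∈ Ioo t1 t2 from
        ⟨by linarith [hξ.1], by linarith [hξ.2]⟩)]
      congr 2; ext x
      change ξ + t1 < u x ↔ ξ < max (u x - t1) 0
      rw [lt_max_iff]
      constructor
      · intro h; left; linarith
      · rintro (h | h)
        · linarith
        · exact absurd hξ.1 (not_lt.2 h.le)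
    · rw [indicator_of_notMem hξ, indicator_of_notMem]
      intro h; exact hξ ⟨by linarith [h.1], by linarith [h.2]⟩
  rw [eX]
  have Xfin : X ≠ ∞ := ne_top_of_le_ne_top ENNReal.ofReal_ne_top
    (key (fun _ => 0) contDiff_const HasCompactSupport.zero (by simp)).2
  have hs : totalVar (fun x => max (u x - t2) 0) ≤ totalVar w - X.toReal := by
    refine csSup_le ⟨0, aux_varSet_zero _⟩ ?_
    rintro _ ⟨φ, hφ, cφ, nφ, rfl⟩
    obtain ⟨k1, k2⟩ := key φ hφ cφ nφ
    have := ENNReal.toReal_mono ENNReal.ofReal_ne_top k2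
    rw [ENNReal.toReal_ofReal (by linarith)] at this
    linarith
  rw [← ENNReal.ofReal_toReal Xfin]
  exact ENNReal.ofReal_le_ofReal (by linarith)

theorem aux_trunc_ae {n : ℕ} (hn : 2 ≤ n) (u : EuclideanSpace ℝ (Fin n) → ℝ) (hu : IsBV u)
    (cu : HasCompactSupport u) (u0 : ∀ x, 0 ≤ u x) (M : ℝ) (hM : 0 ≤ M) (uM : volume {x | M < u x} = 0)
    (t1 t2 : ℝ) (h1 : 0 ≤ t1) (h12 : t1 ≤ t2) :
    ENNReal.ofReal (n * omegaN n ^ ((1 : ℝ) / n)) *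
      ∫⁻ ξ in Ioo t1 t2, volume {x | ξ < u x} ^ (1 - (1 : ℝ) / n)
      ≤ ENNReal.ofReal (totalVar (fun x => max (u x - t1) 0)
        - totalVar (fun x => max (u x - t2) 0)) := by
  set U : EuclideanSpace ℝ (Fin n) → ℝ := fun x => min (u x) M with hU
  have ae : u =ᵐ[volume] U := by
    have : ∀ᵐ x, ¬ (M < u x) := by
      rw [ae_iff]; simpa using uM
    filter_upwards [this] with x hx
    rw [hU]; simp only; rw [min_eq_left (not_lt.1 hx)]
  have hUbv : IsBV U := ⟨hu.1.congr ae, by rw [← aux_varSet_congr ae]; exact hu.2⟩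
  have main := aux_trunc hn U hUbv (cu.comp_left (g := fun t => min t M) (by simpa using hM))
    (fun x => le_min (u0 x) hM) M (fun x => min_le_right _ _) t1 t2 h1 h12
  have ev : ∀ ξ : ℝ, volume {x | ξ < u x} = volume {x | ξ < U x} := by
    intro ξ
    refine measure_congr ?_
    filter_upwards [ae] with x hx
    apply propext
    change ξ < u x ↔ ξ < U x
    rw [hx]
  have et : ∀ t : ℝ, totalVar (fun x => max (u x - t) 0) = totalVar (fun x => max (U x - t) 0) := by
    intro t
    unfold totalVar
    rw [aux_varSet_congr]
    filter_upwards [ae] with x hx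
    rw [hx]
  simp_rw [ev]
  rw [et, et]
  exact main

end Sec_p5

theorem measure_comparison_sigma_ge_DHustar {n : ℕ} (hn : 0 < n)
    (Ω : Set (EuclideanSpace ℝ (Fin n))) (hΩo : IsOpen Ω)
    (hΩb : Bornology.IsBounded Ω) (hΩp : HasFinPerim Ω)
    (u : EuclideanSpace ℝ (Fin n) → ℝ) (hu : IsBV u)
    (hu_nonneg : ∀ x, 0 ≤ u x) (hu_zero : ∀ x ∉ Ω, u x = 0)
    -- `G s = |D (u - u*(s))₊|(ℝⁿ)`
    (G : ℝ → ℝ)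
    (hG : ∀ s, G s = totalVar (fun x => max (u x - decRearr volume u s) 0))
    -- `σ` is the positive measure with `G s = σ((0,s])`
    (σ : Measure ℝ) (hσ : ∀ s, 0 ≤ s → σ (Set.Ioc 0 s) = ENNReal.ofReal (G s))
    -- `H τ = ∫_τ^∞ n ωₙ^{1/n} μ(ξ)^{1-1/n} dξ`, `μ` the distribution function of `u`
    (H : ℝ → ℝ)
    (hH : ∀ τ, H τ = ∫ ξ in Set.Ioi τ,
      (n : ℝ) * omegaN n ^ ((1 : ℝ) / n)
        * ((volume {x | ξ < u x}).toReal) ^ (1 - (1 : ℝ) / n))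
    -- `ν = D[H(u*)]`, the (Stieltjes) derivative measure of the increasing function `H ∘ u*`
    (ν : Measure ℝ)
    (hν : ∀ a b : ℝ, a ≤ b → ν (Set.Ioc a b)
      = ENNReal.ofReal (H (decRearr volume u b) - H (decRearr volume u a))) :
    ∀ A : Set ℝ, MeasurableSet A → A ⊆ Set.Ici 0 → ν A ≤ σ A := by
  intro A hA hA0
  set q : ℝ := 1 - (1 : ℝ) / n with hq
  set C : ℝ := (n : ℝ) * omegaN n ^ ((1 : ℝ) / n) with hC
  have Cpos : 0 < C := by
    have := aux_omega_pos n
    have : (0 : ℝ) < n := by exact_mod_cast hn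
    positivity
  set k : ℝ → ℝ := fun ξ => C * ((volume {x | ξ < u x}).toReal) ^ q with hk
  have k0 : ∀ ξ, 0 ≤ k ξ := fun ξ => mul_nonneg Cpos.le (Real.rpow_nonneg ENNReal.toReal_nonneg _)
  have km : Measurable k := (((aux_meas_lt volume u).ennreal_toReal).pow_const q).const_mul C
  have q0 : 0 ≤ q := by
    rw [hq, sub_nonneg, div_le_one (by exact_mod_cast hn)]
    exact_mod_cast hn
  have Ωfin : volume Ω ≠ ∞ := hΩb.measure_lt_top.ne
  have sub : ∀ ξ : ℝ, 0 ≤ ξ → {x | ξ < u x} ⊆ Ω := by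
    intro ξ hξ x hx
    by_contra hxΩ
    have h1 : ξ < u x := hx
    rw [hu_zero x hxΩ] at h1
    linarith
  have vfin : ∀ ξ : ℝ, 0 ≤ ξ → volume {x | ξ < u x} ≠ ∞ := fun ξ hξ =>
    ne_top_of_le_ne_top Ωfin (measure_mono (sub ξ hξ))
  have kI : ∀ t1 t2 : ℝ, 0 ≤ t1 → IntegrableOn k (Ioc t1 t2) := by
    intro t1 t2 h1
    refine Measure.integrableOn_of_bounded (M := C * (volume Ω).toReal ^ q) (by simp)
      km.aestronglyMeasurable ?_
    filter_upwards [ae_restrict_mem measurableSet_Ioc] with ξ hξ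
    rw [Real.norm_of_nonneg (k0 ξ)]
    refine mul_le_mul_of_nonneg_left (Real.rpow_le_rpow ENNReal.toReal_nonneg ?_ q0) Cpos.le
    exact ENNReal.toReal_mono Ωfin (measure_mono (sub ξ (h1.trans hξ.1.le)))
  have Hdiff : ∀ t1 t2 : ℝ, 0 ≤ t1 → t1 ≤ t2 →
      (H t1 = 0 ∧ H t2 = 0) ∨ H t1 - H t2 = ∫ ξ in Ioc t1 t2, k ξ := by
    intro t1 t2 h1 h12
    have hun : Ioc t1 t2 ∪ Ioi t2 = Ioi t1 := Ioc_union_Ioi_eq_Ioi h12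
    by_cases hi : IntegrableOn k (Ioi t2)
    · right
      rw [hH t1, hH t2, ← hun, setIntegral_union _ measurableSet_Ioi (kI t1 t2 h1) hi]
      · ring
      · rw [Set.disjoint_left]; intro x hx hx'; exact absurd hx' (not_lt.2 hx.2)
    · left
      have hi' : ¬ IntegrableOn k (Ioi t1) := fun h => hi (h.mono_set (Ioi_subset_Ioi h12))
      exact ⟨(hH t1).trans (integral_undef hi'), (hH t2).trans (integral_undef hi)⟩
  have Hanti : ∀ t1 t2 : ℝ, 0 ≤ t1 → t1 ≤ t2 → H t2 ≤ H t1 := by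
    intro t1 t2 h1 h12
    rcases Hdiff t1 t2 h1 h12 with ⟨e1, e2⟩ | e
    · rw [e1, e2]
    · have : 0 ≤ ∫ ξ in Ioc t1 t2, k ξ := integral_nonneg fun ξ => k0 ξ
      linarith
  have us0 : ∀ s, 0 ≤ decRearr volume u s := fun s => Real.sInf_nonneg fun t ht => ht.1.le
  -- no atom at the origin
  have ν0 : ν {0} = 0 := by
    have h1 := hν (-1) 0 (by norm_num)
    have h2 : decRearr volume u (-1) = decRearr volume u 0 := by
      unfold decRearr
      rw [ENNReal.ofReal_of_nonpos (by norm_num), ENNReal.ofReal_zero]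
    rw [h2, sub_self, ENNReal.ofReal_zero] at h1
    refine measure_mono_null ?_ h1
    rintro x rfl
    exact ⟨by norm_num, le_rfl⟩
  have red : ν (A ∩ Ioi 0) ≤ σ (A ∩ Ioi 0) → ν A ≤ σ A := by
    intro h
    have : A ⊆ (A ∩ Ioi 0) ∪ {0} := by
      intro x hx
      have hx0 : (0 : ℝ) ≤ x := hA0 hx
      rcases hx0.eq_or_lt with h | h
      · right; exact h.symm
      · left; exact ⟨hx, h⟩
    calc ν A ≤ ν ((A ∩ Ioi 0) ∪ {0}) := measure_mono this
      _ ≤ ν (A ∩ Ioi 0) + ν {0} := measure_union_le _ _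
      _ = ν (A ∩ Ioi 0) := by rw [ν0, add_zero]
      _ ≤ σ (A ∩ Ioi 0) := h
      _ ≤ σ A := measure_mono inter_subset_left
  apply red
  -- degenerate cases
  have triv : (∀ b : ℝ, 0 ≤ b → ν (Ioc 0 b) = 0) → ν (A ∩ Ioi 0) ≤ σ (A ∩ Ioi 0) := by
    intro h
    have : ν (A ∩ Ioi 0) = 0 := by
      refine measure_mono_null (t := ⋃ m : ℕ, Ioc (0 : ℝ) m) ?_
        (measure_iUnion_null fun m => h m (Nat.cast_nonneg m))
      rintro x ⟨-, hx⟩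
      obtain ⟨m, hm⟩ := exists_nat_ge x
      exact mem_iUnion.2 ⟨m, hx, hm⟩
    rw [this]; exact zero_le
  by_cases hex : ∃ t : ℝ, 0 < t ∧ volume {x | t < |u x|} = 0
  swap
  · apply triv
    intro b hb
    rw [hν 0 b hb]
    have : decRearr volume u 0 = 0 := by
      unfold decRearr
      have : {t : ℝ | 0 < t ∧ volume {x | t < |u x|} ≤ ENNReal.ofReal 0} = ∅ := by
        ext t
        simp only [ENNReal.ofReal_zero, nonpos_iff_eq_zero, mem_empty_iff_false, iff_false]
        exact fun ht => hex ⟨t, ht⟩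
      rw [this, Real.sInf_empty]
    rw [this]
    exact ENNReal.ofReal_of_nonpos (by linarith [Hanti 0 _ le_rfl (us0 b)])
  obtain ⟨M, hM, hMv⟩ := hex
  have uabs : ∀ x, |u x| = u x := fun x => abs_of_nonneg (hu_nonneg x)
  simp_rw [uabs] at hMv
  by_cases hn2 : 2 ≤ n
  swap
  · have hn1 : n = 1 := by omega
    apply triv
    intro b hb
    rw [hν 0 b hb]
    have hH0 : ∀ τ, H τ = 0 := by
      intro τ
      have hkc : k = fun _ => C := by
        ext ξ
        have : q = 0 := by rw [hq, hn1]; simp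
        simp [hk, this]
      refine (hH τ).trans (integral_undef ?_)
      change ¬ IntegrableOn k (Ioi τ)
      rw [hkc, integrableOn_const_iff]
      simp [Cpos.ne']
    simp [hH0]
  -- main case
  have cu : HasCompactSupport u := by
    refine HasCompactSupport.intro hΩb.isCompact_closure fun x hx => hu_zero x ?_
    exact fun h => hx (subset_closure h)
  have usanti : ∀ a b : ℝ, a ≤ b → decRearr volume u b ≤ decRearr volume u a := by
    intro a b hab
    refine csInf_le_csInf ⟨0, fun t ht => ht.1.le⟩ ⟨M, hM, ?_⟩ ?_
    · simp_rw [uabs]; rw [hMv]; exact zero_le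
    · rintro t ⟨ht, ht'⟩
      exact ⟨ht, ht'.trans (ENNReal.ofReal_le_ofReal hab)⟩
  refine aux_measure_le σ ν (fun s hs => ?_) (fun s hs => ?_) ?_ _ (hA.inter measurableSet_Ioi)
    inter_subset_right
  · rw [hσ s hs]; exact ENNReal.ofReal_ne_top
  · rw [hν 0 s hs]; exact ENNReal.ofReal_ne_top
  intro a b ha hab
  set t1 := decRearr volume u b with ht1
  set t2 := decRearr volume u a with ht2
  have h12 : t1 ≤ t2 := usanti a b hab
  have h1 : 0 ≤ t1 := us0 b
  have key := aux_trunc_ae hn2 u hu cu hu_nonneg M hM.le hMv t1 t2 h1 h12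
  rw [← hG b, ← hG a] at key
  have sσ : ENNReal.ofReal (G b - G a) ≤ σ (Ioc a b) := by
    have Ga : 0 ≤ G a := by rw [hG]; exact aux_totalVar_nonneg _
    rw [ENNReal.ofReal_sub _ Ga, ← hσ b (ha.trans hab), ← hσ a ha]
    rw [tsub_le_iff_left]
    rw [← Ioc_union_Ioc_eq_Ioc ha hab]
    exact measure_union_le _ _
  rw [hν a b hab]
  refine le_trans ?_ sσ
  rcases Hdiff t1 t2 h1 h12 with ⟨e1, e2⟩ | e
  · rw [← ht1, ← ht2, e1, e2]; simp
  · rw [← ht1, ← ht2, e]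
    refine le_trans (le_of_eq ?_) key
    rw [ofReal_integral_eq_lintegral_ofReal (kI t1 t2 h1) (Eventually.of_forall k0),
      ← lintegral_const_mul _ ((aux_meas_lt volume u).pow_const _),
      ← restrict_Ioo_eq_restrict_Ioc]
    refine setLIntegral_congr_fun measurableSet_Ioo fun ξ hξ => ?_
    simp only [hk]
    rw [ENNReal.ofReal_mul Cpos.le, ← ENNReal.ofReal_rpow_of_nonneg ENNReal.toReal_nonneg q0,
      ENNReal.ofReal_toReal (vfin ξ (h1.trans hξ.1.le))]
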